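/- arXiv:1712.09674 — 8 statements merged into one kernel-verified Lean document; each statement's English description precedes it below -/
import Mathlib

section
/- Let d ≥ 1, l₁,…,l_d > 0, and let f : ℝ^d × [0,1] → [0,∞) be Lipschitz, periodic in x with periods l₁e₁,…,l_de_d (standard basis), with f(x,0) = f(x,1) = 0, and suppose there are θ ∈ (0,1/2) and θ' > 0 such that f(x,u) = 0 for all (x,u) with u ∈ [0,θ'], and for each x the map u ↦ f(x,u) is positive and non-increasing on (1−θ,1). Fix e ∈ S^{d−1} and suppose there is a pulsating front in direction e with speed c > 0: a C¹ function U : ℝ×ℝ^d → ℝ, periodic in its second argument with the above periods, with ∂_sU < 0 everywhere, 0 < U < 1, U(s,x) → 1 as s → −∞ and U(s,x) → 0 as s → +∞ uniformly in x, such that (t,x) ↦ U(x·e − ct, x) is C^{1,2} and solves u_t = Δu + f(x,u) classically on ℝ×ℝ^d. Then c is an exclusive front speed in direction e for u_t = Δu + f(x,u): (a) every solution u_e with initial datum (1−θ/2)·χ_{{x : x·e<0}} satisfies, for every compact K ⊆ {x : x·e > 0}, lim_{t→∞} inf_{x∈(ce−K)t} u_e(t,x) = 1 and lim_{t→∞}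 sup_{x∈(ce+K)t} u_e(t,x) = 0; and (b) for every compact K ⊆ {x : x·e > 0} there is α_K > 0 such that for all α ∈ (0,α_K], every solution u_{e,α} with initial datum χ_{{x·e<0}} + α·χ_{{x·e≥0}} satisfies limsup_{t→∞} sup_{x∈(ce+K)t} u_{e,α}(t,x) ≤ α. -/
open MeasureTheory Metric Set Filter
open scoped Topology RealInnerProductSpace NNReal Pointwise

noncomputable section

/-- `d`-dimensional Euclidean space. -/
abbrev Euc (d : ℕ) : Type := EuclideanSpace ℝ (Fin d)

/-- The spatial Laplacian of `φ : ℝ^d → ℝ`. -/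
def lap {d : ℕ} (φ : Euc d → ℝ) (x : Euc d) : ℝ :=
  ∑ i : Fin d,
    fderiv ℝ (fun y => fderiv ℝ φ y (EuclideanSpace.single i 1)) x (EuclideanSpace.single i 1)

/-- A classical solution `u : [0,∞)×ℝ^d → [0,1]` of `u_t = Δu + F(x,u)` with initial
datum `g`: continuous and `C^{1,2}` in space for `t>0`, solving the equation classically for
`t>0`, with `u(0,·) = g` and `u(t,x) → g(x₀)` as `(t,x) → (0⁺,x₀)` at continuity points of `g`. -/
structure IsSolR {d : ℕ} (F : Euc d → ℝ → ℝ) (g : Euc d → ℝ) (u : ℝ → Euc d → ℝ) : Prop where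
  mem_Icc : ∀ t x, 0 ≤ t → u t x ∈ Icc (0:ℝ) 1
  contOn : ContinuousOn (fun p : ℝ × Euc d => u p.1 p.2) (Ioi 0 ×ˢ univ)
  spatial : ∀ t, 0 < t → ContDiff ℝ 2 (u t)
  eqn : ∀ t x, 0 < t → HasDerivAt (fun s => u s x) (lap (u t) x + F x (u t x)) t
  init : ∀ x, u 0 x = g x
  initLim : ∀ x₀ : Euc d, ContinuousAt g x₀ →
    Tendsto (fun p : ℝ × Euc d => u p.1 p.2) ((𝓝[>] (0:ℝ)) ×ˢ 𝓝 x₀) (𝓝 (g x₀))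

/-- Hypothesis (H1). -/
structure H1 {d : ℕ} {Ω : Type*} (f : Euc d → ℝ → Ω → ℝ) (f₀ : ℝ → ℝ) (M θ₀ : ℝ) : Prop where
  M_ge_one : 1 ≤ M
  lip : ∀ x x' : Euc d, ∀ u u' : ℝ, ∀ ω : Ω, u ∈ Icc (0:ℝ) 1 → u' ∈ Icc (0:ℝ) 1 →
    |f x u ω - f x' u' ω| ≤ M * (‖x - x'‖ + |u - u'|)
  nonneg : ∀ x u ω, u ∈ Icc (0:ℝ) 1 → 0 ≤ f x u ω
  zero_at_zero : ∀ x ω, f x 0 ω = 0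
  zero_at_one : ∀ x ω, f x 1 ω = 0
  theta_mem : θ₀ ∈ Ioo (0:ℝ) 1
  f0_lip : ∃ L : ℝ≥0, LipschitzOnWith L f₀ (Icc 0 1)
  f0_nonneg : ∀ u ∈ Icc (0:ℝ) 1, 0 ≤ f₀ u
  f0_zero_low : ∀ u ∈ Icc (0:ℝ) θ₀, f₀ u = 0
  f0_zero_one : f₀ 1 = 0
  f0_pos : ∀ u ∈ Ioo θ₀ 1, 0 < f₀ u
  f0_le : ∀ x u ω, u ∈ Icc (0:ℝ) 1 → f₀ u ≤ f x u ω

/-- `c₀` is the traveling front speed of the homogeneous reaction `f₀`. -/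
def IsTravelingFrontSpeed (f₀ : ℝ → ℝ) (c₀ : ℝ) : Prop :=
  ∃ U₀ U₀' : ℝ → ℝ, StrictAnti U₀ ∧ (∀ s, U₀ s ∈ Ioo (0:ℝ) 1) ∧
    (∀ s, HasDerivAt U₀ (U₀' s) s) ∧
    (∀ s, HasDerivAt U₀' (-(c₀ * U₀' s) - f₀ (U₀ s)) s) ∧
    Tendsto U₀ atBot (𝓝 1) ∧ Tendsto U₀ atTop (𝓝 0)

/-- `γ_f(x,ω;ζ) = inf{u ≥ 0 : f(x,u,ω) > ζu}`. -/
def gammaF {d : ℕ} {Ω : Type*} (f : Euc d → ℝ → Ω → ℝ) (ζ : ℝ) (x : Euc d) (ω : Ω) : ℝ :=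
  sInf {u : ℝ | 0 ≤ u ∧ ζ * u < f x u ω}

/-- `f ∈ F(f₀,M,ζ,ξ)`: the lower bound `f ≥ ξ` on `[γ_f(x,ω;ζ),θ₀]` (the (H1)-part is
recorded separately by `H1`). -/
def memF {d : ℕ} {Ω : Type*} (f : Euc d → ℝ → Ω → ℝ) (θ₀ ζ ξ : ℝ) : Prop :=
  ∀ x ω, {u : ℝ | 0 ≤ u ∧ ζ * u < f x u ω}.Nonempty →
    ∀ u ∈ Icc (gammaF f ζ x ω) θ₀, ξ ≤ f x u ω

/-- `R₀` is admissible: every solution of `v_t = Δv + f₀(v)` with initial datum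
`((1+θ₀)/2)χ_{B_{R₀}(0)}` converges to `1` locally uniformly as `t → ∞`. -/
def Admissible (d : ℕ) (f₀ : ℝ → ℝ) (θ₀ R₀ : ℝ) : Prop :=
  ∀ v : ℝ → Euc d → ℝ,
    IsSolR (fun (_ : Euc d) u => f₀ u)
      ((ball (0:Euc d) R₀).indicator fun _ => (1+θ₀)/2) v →
    TendstoLocallyUniformly (fun t x => v t x) (fun _ => (1:ℝ)) atTop

/-- The Wulff-shape set `S = {se : e ∈ S^{d-1}, 0 ≤ s < w(e)}` of a radial function `w`. -/
def wulff {d : ℕ} (w : Euc d → ℝ) : Set (Euc d) :=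
  {x | ∃ e ∈ sphere (0:Euc d) 1, ∃ s : ℝ, 0 ≤ s ∧ s < w e ∧ x = s • e}

/-- `S` is a deterministic Wulff shape for `u_t = Δu + f(x,u,ω)`. -/
def DetWulff {d : ℕ} {Ω : Type*} [MeasurableSpace Ω] (P : Measure Ω)
    (f : Euc d → ℝ → Ω → ℝ) (f₀ : ℝ → ℝ) (θ₀ : ℝ) (S : Set (Euc d)) : Prop :=
  ∃ Ω₀ : Set Ω, MeasurableSet Ω₀ ∧ P Ω₀ = 1 ∧ ∀ ω ∈ Ω₀, ∀ R₀ : ℝ, 0 < R₀ →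
    Admissible d f₀ θ₀ R₀ →
    ∀ u : ℝ → Euc d → ℝ,
      IsSolR (fun x v => f x v ω) ((ball (0:Euc d) R₀).indicator fun _ => (1+θ₀)/2) u →
      ∀ δ : ℝ, 0 < δ →
        (∀ ε : ℝ, 0 < ε → ∃ T : ℝ, ∀ t ≥ T, ∀ x ∈ ((1-δ)*t) • S, 1 - ε ≤ u t x) ∧
        (∀ ε : ℝ, 0 < ε → ∃ T : ℝ, ∀ x : Euc d, ∀ t ≥ T, x ∉ ((1+δ)*t) • S → u t x ≤ ε)

/-- `c` is a deterministic front speed in direction `e` for `u_t = Δu + f(x,u,ω)`. -/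
def DetFrontSpeed {d : ℕ} {Ω : Type*} [MeasurableSpace Ω] (P : Measure Ω)
    (f : Euc d → ℝ → Ω → ℝ) (θ₀ : ℝ) (e : Euc d) (c : ℝ) : Prop :=
  ∃ Ω₀ : Set Ω, MeasurableSet Ω₀ ∧ P Ω₀ = 1 ∧ ∀ ω ∈ Ω₀,
    ∀ u : ℝ → Euc d → ℝ,
      IsSolR (fun x v => f x v ω)
        ({x : Euc d | ⟪x, e⟫ < 0}.indicator fun _ => (1+θ₀)/2) u →
      ∀ K : Set (Euc d), IsCompact K → K ⊆ {x : Euc d | 0 < ⟪x, e⟫} →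
        (∀ ε : ℝ, 0 < ε → ∃ T : ℝ, ∀ t ≥ T, ∀ k ∈ K, 1 - ε ≤ u t (t • (c • e - k))) ∧
        (∀ ε : ℝ, 0 < ε → ∃ T : ℝ, ∀ t ≥ T, ∀ k ∈ K, u t (t • (c • e + k)) ≤ ε)

/-- `c` is a deterministic exclusive front speed in direction `e`. -/
def DetExclFrontSpeed {d : ℕ} {Ω : Type*} [MeasurableSpace Ω] (P : Measure Ω)
    (f : Euc d → ℝ → Ω → ℝ) (θ₀ : ℝ) (e : Euc d) (c : ℝ) : Prop :=
  DetFrontSpeed P f θ₀ e c ∧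
  ∀ K : Set (Euc d), IsCompact K → K ⊆ {x : Euc d | 0 < ⟪x, e⟫} →
    ∃ β : ℝ → ℝ, (∀ α ∈ Ioc (0:ℝ) 1, β α ∈ Ioc (0:ℝ) 1) ∧
      Tendsto β (𝓝[>] (0:ℝ)) (𝓝 0) ∧
      ∃ Ω₀ : Set Ω, MeasurableSet Ω₀ ∧ P Ω₀ = 1 ∧ ∀ ω ∈ Ω₀, ∀ α ∈ Ioc (0:ℝ) 1,
        ∀ u : ℝ → Euc d → ℝ,
          IsSolR (fun x v => f x v ω) (fun x => if ⟪x, e⟫ < 0 then 1 else α) u →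
          ∀ ε : ℝ, 0 < ε → ∃ T : ℝ, ∀ t ≥ T, ∀ k ∈ K, u t (t • (c • e + k)) ≤ β α + ε

lemma dir2_nonneg {d : ℕ} (φ : Euc d → ℝ) (hφ : ContDiff ℝ 2 φ) (x v : Euc d) (a b η : ℝ)
    (hmin : IsLocalMin (fun r : ℝ => a * φ (x + r • v) + η * (b * r + r ^ 2)) 0) :
    0 ≤ a * fderiv ℝ (fun y => fderiv ℝ φ y v) x v + 2 * η := by
  set G : ℝ → ℝ := fun r : ℝ => a * φ (x + r • v) + η * (b * r + r ^ 2) with hG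
  have hline : ∀ r : ℝ, HasDerivAt (fun r : ℝ => x + r • v) v r := by
    intro r
    simpa using ((hasDerivAt_id r).smul_const v).const_add x
  have hpoly : ∀ r : ℝ, HasDerivAt (fun r : ℝ => η * (b * r + r ^ 2)) (η * (b + 2 * r)) r := by
    intro r
    have := (((hasDerivAt_id r).const_mul b).add ((hasDerivAt_id r).pow 2)).const_mul η
    simpa using this
  have h1 : ∀ r, HasDerivAt G (a * fderiv ℝ φ (x + r • v) v + η * (b + 2 * r)) r := by
    intro r
    have hd : HasFDerivAt φ (fderiv ℝ φ (x + r • v)) (x + r • v) :=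
      (hφ.differentiable (by norm_num) _).hasFDerivAt
    have := hd.comp_hasDerivAt r (hline r)
    exact (this.const_mul a).add (hpoly r)
  have hdG : deriv G = fun r => a * fderiv ℝ φ (x + r • v) v + η * (b + 2 * r) :=
    funext fun r => (h1 r).deriv
  have hC1 : ContDiff ℝ 1 (fun y => fderiv ℝ φ y v) :=
    (hφ.fderiv_right (m := 1) (by norm_num)).clm_apply contDiff_const
  have h2 : HasDerivAt (deriv G) (a * fderiv ℝ (fun y => fderiv ℝ φ y v) x v + 2 * η) 0 := by
    rw [hdG]
    have hd : HasFDerivAt (fun y => fderiv ℝ φ y v)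
        (fderiv ℝ (fun y => fderiv ℝ φ y v) (x + (0:ℝ) • v)) (x + (0:ℝ) • v) :=
      (hC1.differentiable (by norm_num) _).hasFDerivAt
    have h3 := (hd.comp_hasDerivAt (0:ℝ) (hline 0)).const_mul a
    have h4 : HasDerivAt (fun r : ℝ => η * (b + 2 * r)) (2 * η) 0 := by
      have := (((hasDerivAt_id (0:ℝ)).const_mul 2).const_add b).const_mul η
      simpa [mul_comm] using this
    have h5 := h3.add h4
    simp only [zero_smul, add_zero] at h5
    exact h5
  by_contra hneg
  push Not at hneg
  have hdd : deriv (deriv G) 0 < 0 := by rw [h2.deriv]; exact hneg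
  have hmax := isLocalMax_of_deriv_deriv_neg hdd hmin.deriv_eq_zero (h1 0).continuousAt
  have heq : G =ᶠ[𝓝 0] fun _ => G 0 := by
    filter_upwards [hmin, hmax] with r h1 h2 using le_antisymm h2 h1
  have : deriv (deriv G) 0 = 0 := by
    rw [(heq.deriv).deriv_eq]; simp
  linarith

lemma maxprin {d : ℕ} (w D : ℝ → Euc d → ℝ) (K M : ℝ) (hK : 0 ≤ K) (hM : 0 ≤ M)
    (hbd : ∀ t x, 0 < t → -M ≤ w t x)
    (hcont : ContinuousOn (fun p : ℝ × Euc d => w p.1 p.2) (Ioi 0 ×ˢ univ))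
    (hC2 : ∀ t, 0 < t → ContDiff ℝ 2 (w t))
    (hD : ∀ t x, 0 < t → HasDerivAt (fun s => w s x) (D t x) t)
    (hineq : ∀ t x, 0 < t → w t x < 0 → lap (w t) x + K * w t x ≤ D t x)
    (hinit : ∀ x₀ : Euc d, ∀ η : ℝ, 0 < η →
      ∀ᶠ p : ℝ × Euc d in (𝓝[>] (0:ℝ)) ×ˢ 𝓝 x₀, -η < w p.1 p.2) :
    ∀ t x, 0 < t → 0 ≤ w t x := by
  intro T X hT
  have key : ∀ η : ℝ, 0 < η →
      0 ≤ Real.exp (-K * T) * w T X + η * (1 + ‖X‖ ^ 2 + (2 * d + 1) * T) := by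
    intro η hη
    by_contra hneg
    push Not at hneg
    set z : ℝ → Euc d → ℝ := fun t x =>
      Real.exp (-K * t) * w t x + η * (1 + ‖x‖ ^ 2 + (2 * d + 1) * t) with hz
    obtain ⟨R, hRX, hR0, hR⟩ : ∃ R : ℝ, ‖X‖ ≤ R ∧ 0 ≤ R ∧ M ≤ η * R ^ 2 := by
      refine ⟨‖X‖ + M / η + 1, ?_, ?_, ?_⟩
      · have : 0 ≤ M / η := by positivity
        linarith
      · positivity
      · have h1 : 0 ≤ M / η := by positivity
        have h2 : M = η * (M / η) := by field_simp
        have h3 := norm_nonneg X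
        have : M / η ≤ (‖X‖ + M / η + 1) ^ 2 := by nlinarith
        nlinarith
    have hexp1 : ∀ t, 0 < t → Real.exp (-K * t) ≤ 1 := by
      intro t ht
      rw [Real.exp_le_one_iff]
      nlinarith
    have hexp0 : ∀ t, 0 < Real.exp (-K * t) := fun t => Real.exp_pos _
    -- small times
    have hsmall : ∀ᶠ t in 𝓝[>] (0:ℝ), ∀ x ∈ closedBall (0 : Euc d) R, -η < w t x := by
      refine (isCompact_closedBall (0 : Euc d) R).induction_on
        (p := fun s => ∀ᶠ t in 𝓝[>] (0:ℝ), ∀ x ∈ s, -η < w t x) ?_ ?_ ?_ ?_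
      · simp
      · intro s t hst h
        filter_upwards [h] with r hr x hx using hr x (hst hx)
      · intro s t hs ht
        filter_upwards [hs, ht] with r h1 h2 x hx
        exact hx.elim (h1 x) (h2 x)
      · intro x _
        obtain ⟨pa, ha, pb, hb, hab⟩ := Filter.eventually_prod_iff.1 (hinit x η hη)
        refine ⟨{y | pb y}, mem_nhdsWithin_of_mem_nhds hb, ?_⟩
        filter_upwards [ha] with t ht y hy using hab ht hy
    obtain ⟨t0, ht0, ht00, ht0T⟩ : ∃ t0, (∀ x ∈ closedBall (0 : Euc d) R, -η < w t0 x) ∧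
        0 < t0 ∧ t0 < T := by
      have h1 : ∀ᶠ t in 𝓝[>] (0:ℝ), t ∈ Ioo 0 T := Ioo_mem_nhdsGT hT
      obtain ⟨t, h, h'⟩ := (hsmall.and h1).exists
      exact ⟨t, h, h'.1, h'.2⟩
    have hcpt : IsCompact (Icc t0 T ×ˢ closedBall (0 : Euc d) R) :=
      isCompact_Icc.prod (isCompact_closedBall _ _)
    have hzc : ContinuousOn (fun p : ℝ × Euc d => z p.1 p.2)
        (Icc t0 T ×ˢ closedBall (0 : Euc d) R) := by
      have h1 : ContinuousOn (fun p : ℝ × Euc d => w p.1 p.2)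
          (Icc t0 T ×ˢ closedBall (0 : Euc d) R) := by
        refine hcont.mono ?_
        rintro ⟨t, x⟩ ⟨h, -⟩
        exact ⟨lt_of_lt_of_le ht00 h.1, mem_univ _⟩
      refine ContinuousOn.add (ContinuousOn.mul ?_ h1) ?_
      · exact Continuous.continuousOn (by fun_prop)
      · exact Continuous.continuousOn (by fun_prop)
    obtain ⟨⟨ts, xs⟩, ⟨hts, hxs⟩, hmin⟩ := hcpt.exists_isMinOn
      ⟨(T, X), ⟨ht0T.le, le_rfl⟩, by simpa using hRX⟩ hzc
    have hmin' : ∀ t x, t ∈ Icc t0 T → ‖x‖ ≤ R → z ts xs ≤ z t x := by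
      intro t x ht hx
      exact hmin (a := (t, x)) ⟨ht, by simpa using hx⟩
    simp only at hts hxs
    have hts0 : 0 < ts := lt_of_lt_of_le ht00 hts.1
    have hzneg : z ts xs < 0 := lt_of_le_of_lt (hmin' T X ⟨ht0T.le, le_rfl⟩ hRX) hneg
    have hd0 : (0:ℝ) ≤ (2 * d + 1) * ts := by positivity
    have hwneg : w ts xs < 0 := by
      by_contra h
      push Not at h
      have : 0 ≤ z ts xs := by
        simp only [hz]
        have := (hexp0 ts).le
        positivity
      linarith
    have hew : w ts xs ≤ Real.exp (-K * ts) * w ts xs := by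
      nlinarith [hexp1 ts hts0]
    have hgt : t0 < ts := by
      rcases lt_or_eq_of_le hts.1 with h | h
      · exact h
      · exfalso
        have h1 := ht0 xs hxs
        rw [h] at h1
        have : 0 ≤ η * (‖xs‖ ^ 2 + (2 * d + 1) * ts) := by positivity
        simp only [hz] at hzneg
        nlinarith
    have hxR : ‖xs‖ < R := by
      have h0 : ‖xs‖ ≤ R := by simpa using hxs
      rcases lt_or_eq_of_le h0 with h | h
      · exact h
      · exfalso
        have h1 := hbd ts xs hts0
        simp only [hz] at hzneg
        rw [h] at hzneg
        have : 0 ≤ η * (1 + (2 * d + 1) * ts) := by positivity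
        nlinarith
    -- time derivative
    have hDz : HasDerivAt (fun s => z s xs)
        (Real.exp (-K * ts) * (-K) * w ts xs + Real.exp (-K * ts) * D ts xs
          + η * (2 * d + 1)) ts := by
      have h1 : HasDerivAt (fun s : ℝ => Real.exp (-K * s)) (Real.exp (-K * ts) * (-K)) ts := by
        simpa using ((hasDerivAt_id ts).const_mul (-K)).exp
      have h2 : HasDerivAt (fun s : ℝ => η * (1 + ‖xs‖ ^ 2 + (2 * d + 1) * s))
          (η * (2 * d + 1)) ts := by
        simpa using (((hasDerivAt_id ts).const_mul (2 * (d:ℝ) + 1)).const_add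
          (1 + ‖xs‖ ^ 2)).const_mul η
      exact (h1.mul (hD ts xs hts0)).add h2
    have hDle : Real.exp (-K * ts) * (-K) * w ts xs + Real.exp (-K * ts) * D ts xs
          + η * (2 * d + 1) ≤ 0 := by
      have h1 := hasDerivWithinAt_iff_tendsto_slope.1 (hDz.hasDerivWithinAt (s := Iio ts))
      have h2 : (Iio ts) \ {ts} = Iio ts := by
        ext y; simp
      rw [h2] at h1
      refine le_of_tendsto h1 ?_
      have h3 : ∀ᶠ t in 𝓝[<] ts, t ∈ Ioo t0 ts := Ioo_mem_nhdsLT hgt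
      filter_upwards [h3] with t ht
      rw [slope_def_field]
      apply div_nonpos_of_nonneg_of_nonpos
      · have := hmin' t xs ⟨ht.1.le, ht.2.le.trans hts.2⟩ hxR.le
        linarith
      · linarith [ht.2]
    -- space
    have hsp : ∀ i : Fin d, 0 ≤ Real.exp (-K * ts) *
        fderiv ℝ (fun y => fderiv ℝ (w ts) y (EuclideanSpace.single i 1)) xs
          (EuclideanSpace.single i 1) + 2 * η := by
      intro i
      set v : Euc d := EuclideanSpace.single i 1 with hv
      refine dir2_nonneg (w ts) (hC2 ts hts0) xs v _ (2 * ⟪xs, v⟫) η ?_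
      have hc : Continuous (fun r : ℝ => ‖xs + r • v‖) := by fun_prop
      have h1 : ∀ᶠ r in 𝓝 (0:ℝ), ‖xs + r • v‖ < R := by
        apply hc.continuousAt.eventually_lt_const
        simpa using hxR
      filter_upwards [h1] with r hr
      have h2 := hmin' ts (xs + r • v) hts hr.le
      have h3 : ‖xs + r • v‖ ^ 2 = ‖xs‖ ^ 2 + 2 * r * ⟪xs, v⟫ + r ^ 2 := by
        rw [norm_add_sq_real, inner_smul_right, norm_smul]
        have : ‖v‖ = 1 := by simp [hv]
        rw [this]
        simp only [Real.norm_eq_abs, mul_one, sq_abs]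
        ring
      simp only [hz] at h2
      rw [h3] at h2
      simp only [zero_smul, add_zero]
      nlinarith
    have hlap : 0 ≤ Real.exp (-K * ts) * lap (w ts) xs + 2 * d * η := by
      have := Finset.sum_nonneg (s := Finset.univ) fun i _ => hsp i
      rw [Finset.sum_add_distrib, ← Finset.mul_sum] at this
      simp only [Finset.sum_const, Finset.card_univ, Fintype.card_fin, nsmul_eq_mul] at this
      unfold lap
      linarith
    have h5 := mul_le_mul_of_nonneg_left (hineq ts xs hts0 hwneg) (hexp0 ts).le
    nlinarith
  have hlim : Tendsto (fun η : ℝ => Real.exp (-K * T) * w T X +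
      η * (1 + ‖X‖ ^ 2 + (2 * d + 1) * T)) (𝓝[>] 0) (𝓝 (Real.exp (-K * T) * w T X)) := by
    have hc : Continuous (fun η : ℝ => Real.exp (-K * T) * w T X +
      η * (1 + ‖X‖ ^ 2 + (2 * d + 1) * T)) := by fun_prop
    have := hc.tendsto 0
    simp only [zero_mul, add_zero] at this
    exact this.mono_left nhdsWithin_le_nhds
  have h0 : 0 ≤ Real.exp (-K * T) * w T X := by
    refine ge_of_tendsto hlim ?_
    filter_upwards [self_mem_nhdsWithin] with η hη using key η hη
  exact nonneg_of_mul_nonneg_right h0 (Real.exp_pos _)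

lemma lap_add_const_sub {d : ℕ} (φ ψ : Euc d → ℝ) (hφ : ContDiff ℝ 2 φ) (hψ : ContDiff ℝ 2 ψ)
    (k : ℝ) (x : Euc d) : lap (fun y => φ y + k - ψ y) x = lap φ x - lap ψ x := by
  unfold lap
  rw [← Finset.sum_sub_distrib]
  refine Finset.sum_congr rfl fun i _ => ?_
  set v : Euc d := EuclideanSpace.single i 1
  have h1 : (fun y => fderiv ℝ (fun y => φ y + k - ψ y) y v) =
      fun y => fderiv ℝ φ y v - fderiv ℝ ψ y v := by
    funext y
    have ha : HasFDerivAt φ (fderiv ℝ φ y) y := (hφ.differentiable (by norm_num) _).hasFDerivAt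
    have hb : HasFDerivAt ψ (fderiv ℝ ψ y) y := (hψ.differentiable (by norm_num) _).hasFDerivAt
    have := ((ha.add_const k).sub hb).fderiv
    change fderiv ℝ (fun y => φ y + k - ψ y) y = _ at this
    rw [this]
    rfl
  rw [h1]
  have hC : ∀ χ : Euc d → ℝ, ContDiff ℝ 2 χ → HasFDerivAt (fun y => fderiv ℝ χ y v)
      (fderiv ℝ (fun y => fderiv ℝ χ y v) x) x := by
    intro χ hχ
    have hC1 : ContDiff ℝ 1 (fun y => fderiv ℝ χ y v) :=
      (hχ.fderiv_right (m := 1) (by norm_num)).clm_apply contDiff_const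
    exact (hC1.differentiable (by norm_num) _).hasFDerivAt
  have := ((hC φ hφ).sub (hC ψ hψ)).fderiv
  change fderiv ℝ (fun y => fderiv ℝ φ y v - fderiv ℝ ψ y v) x = _ at this
  rw [this]
  rfl

lemma per_reduce {d : ℕ} (l : Fin d → ℝ) (hl : ∀ i, 0 < l i) :
    ∃ C : Set (Euc d), IsCompact C ∧ ∀ P : Euc d → Prop,
      (∀ i x, P (x + l i • EuclideanSpace.single i 1) ↔ P x) → (∀ x ∈ C, P x) → ∀ x, P x := by
  refine ⟨(WithLp.toLp 2) '' (Set.univ.pi fun i => Icc 0 (l i)),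
    (isCompact_univ_pi fun i => isCompact_Icc).image (PiLp.continuous_toLp 2 _), ?_⟩
  intro P hP hC x
  have hint : ∀ (n : ℤ) i x, P (x + n • (l i • EuclideanSpace.single i (1:ℝ))) ↔ P x := by
    intro n i
    induction n using Int.induction_on with
    | zero => intro x; simp
    | succ k ih =>
      intro x
      rw [add_zsmul, one_zsmul, ← add_assoc, hP, ih]
    | pred k ih =>
      intro x
      rw [← hP i, sub_zsmul, one_zsmul, add_assoc, ← sub_eq_add_neg, sub_add_cancel, ih]
  set n : Fin d → ℤ := fun i => -⌊x i / l i⌋ with hn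
  have hsum : ∀ s : Finset (Fin d), ∀ x,
      P (x + ∑ i ∈ s, n i • (l i • EuclideanSpace.single i (1:ℝ))) ↔ P x := by
    intro s
    induction s using Finset.induction_on with
    | empty => intro x; simp
    | insert a s ha ih =>
      intro x
      rw [Finset.sum_insert ha, ← add_assoc, ih, hint]
  rw [← hsum Finset.univ x]
  apply hC
  refine ⟨fun i => (x + ∑ i, n i • (l i • EuclideanSpace.single i (1:ℝ)) : Euc d) i, ?_, ?_⟩
  · intro i _
    have hcoord : (x + ∑ i, n i • (l i • EuclideanSpace.single i (1:ℝ)) : Euc d) i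
        = x i - ⌊x i / l i⌋ * l i := by
      simp [hn, Finset.sum_apply, Pi.single_apply, sub_eq_add_neg]
      ring
    simp only [hcoord]
    have h1 := Int.floor_le (x i / l i)
    have h2 := Int.lt_floor_add_one (x i / l i)
    have h3 : x i / l i * l i = x i := div_mul_cancel₀ _ (hl i).ne'
    have h4 := hl i
    constructor <;> nlinarith
  · ext i; rfl

/-- The front facts in the form used below. -/
structure FrontW {d : ℕ} (f : Euc d → ℝ → ℝ) (e : Euc d) (c : ℝ) (W : ℝ → Euc d → ℝ) : Prop where
  cont : Continuous fun p : ℝ × Euc d => W p.1 p.2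
  c2 : ∀ t, ContDiff ℝ 2 (W t)
  eqn : ∀ t x, HasDerivAt (fun s => W s x) (lap (W t) x + f x (W t x)) t
  range : ∀ t x, W t x ∈ Ioo (0:ℝ) 1
  pos : ∀ t x, 0 < lap (W t) x + f x (W t x)
  kappa : ∀ a b : ℝ, 0 < a → b < 1 → ∃ κ : ℝ, 0 < κ ∧ ∀ t x, a ≤ W t x → W t x ≤ b →
    κ ≤ lap (W t) x + f x (W t x)
  top : ∀ ε : ℝ, 0 < ε → ∃ R : ℝ, ∀ t x, R ≤ ⟪x, e⟫ - c * t → W t x < ε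
  bot : ∀ ε : ℝ, 0 < ε → ∃ R : ℝ, ∀ t x, ⟪x, e⟫ - c * t ≤ -R → 1 - ε < W t x

lemma front_mk {d : ℕ} (l : Fin d → ℝ) (hl : ∀ i, 0 < l i)
    (f : Euc d → ℝ → ℝ) (e : Euc d) (c : ℝ) (hc : 0 < c)
    (U : ℝ → Euc d → ℝ)
    (hU1 : ContDiff ℝ 1 fun p : ℝ × Euc d => U p.1 p.2)
    (hUper : ∀ i : Fin d, ∀ (s : ℝ) (x : Euc d),
      U s (x + l i • EuclideanSpace.single i 1) = U s x)
    (hUdec : ∀ (s : ℝ) (x : Euc d), deriv (fun s' => U s' x) s < 0)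
    (hUrange : ∀ (s : ℝ) (x : Euc d), U s x ∈ Ioo (0:ℝ) 1)
    (hUbot : TendstoUniformly U (fun _ => (1:ℝ)) atBot)
    (hUtop : TendstoUniformly U (fun _ => (0:ℝ)) atTop)
    (hC2 : ∀ t : ℝ, ContDiff ℝ 2 fun x : Euc d => U (⟪x, e⟫ - c * t) x)
    (heqn : ∀ (t : ℝ) (x : Euc d),
      HasDerivAt (fun s : ℝ => U (⟪x, e⟫ - c * s) x)
        (lap (fun z : Euc d => U (⟪z, e⟫ - c * t) z) x + f x (U (⟪x, e⟫ - c * t) x)) t) :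
    FrontW f e c (fun t x => U (⟪x, e⟫ - c * t) x) := by
  have hfd : ∀ s x, HasDerivAt (fun s' => U s' x)
      (fderiv ℝ (fun p : ℝ × Euc d => U p.1 p.2) (s, x) (1, 0)) s := by
    intro s x
    have h1 : HasFDerivAt (fun p : ℝ × Euc d => U p.1 p.2) _ (s, x) :=
      (hU1.differentiable (by norm_num) _).hasFDerivAt
    have h2 : HasDerivAt (fun s' : ℝ => (s', x)) ((1 : ℝ), (0 : Euc d)) s :=
      (hasDerivAt_id s).prodMk (hasDerivAt_const s x)
    exact h1.comp_hasDerivAt s h2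
  have hdc : Continuous fun p : ℝ × Euc d => deriv (fun s' => U s' p.2) p.1 := by
    have : (fun p : ℝ × Euc d => deriv (fun s' => U s' p.2) p.1) =
        fun p => fderiv ℝ (fun p : ℝ × Euc d => U p.1 p.2) p (1, 0) := by
      funext p
      exact (hfd p.1 p.2).deriv
    rw [this]
    exact (hU1.continuous_fderiv (by norm_num)).clm_apply continuous_const
  have hP : ∀ t x, lap (fun z : Euc d => U (⟪z, e⟫ - c * t) z) x + f x (U (⟪x, e⟫ - c * t) x)
      = c * (-deriv (fun s' => U s' x) (⟪x, e⟫ - c * t)) := by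
    intro t x
    refine (heqn t x).unique ?_
    have h1 : HasDerivAt (fun s : ℝ => ⟪x, e⟫ - c * s) (-c) t := by
      simpa using ((hasDerivAt_id t).const_mul c).const_sub ⟪x, e⟫
    have h2 := (hfd (⟪x, e⟫ - c * t) x)
    have h3 := HasDerivAt.comp t h2 h1
    rw [(hfd (⟪x, e⟫ - c * t) x).deriv]
    exact h3.congr_deriv (by ring)
  have htop : ∀ ε : ℝ, 0 < ε → ∃ R : ℝ, ∀ s x, R ≤ s → U s x < ε := by
    intro ε hε
    obtain ⟨R, hR⟩ := Filter.eventually_atTop.1 (Metric.tendstoUniformly_iff.1 hUtop ε hε)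
    refine ⟨R, fun s x hs => ?_⟩
    have := hR s hs x
    rw [Real.dist_eq, abs_lt] at this
    linarith
  have hbot : ∀ ε : ℝ, 0 < ε → ∃ R : ℝ, ∀ s x, s ≤ -R → 1 - ε < U s x := by
    intro ε hε
    obtain ⟨R, hR⟩ := Filter.eventually_atBot.1 (Metric.tendstoUniformly_iff.1 hUbot ε hε)
    refine ⟨-R, fun s x hs => ?_⟩
    have := hR s (by linarith) x
    rw [Real.dist_eq, abs_lt] at this
    linarith
  refine ⟨?_, hC2, heqn, fun t x => hUrange _ _, ?_, ?_, ?_, ?_⟩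
  · have : Continuous fun p : ℝ × Euc d => (⟪p.2, e⟫ - c * p.1, p.2) := by fun_prop
    exact hU1.continuous.comp this
  · intro t x
    rw [hP]
    have := hUdec (⟪x, e⟫ - c * t) x
    exact mul_pos hc (by linarith)
  · intro a b ha hb
    obtain ⟨R1, hR1⟩ := htop a ha
    obtain ⟨R2, hR2⟩ := hbot (1 - b) (by linarith)
    obtain ⟨C, hC, hCP⟩ := per_reduce l hl
    have hcpt : IsCompact (Icc (-R2) R1 ×ˢ C) := isCompact_Icc.prod hC
    obtain ⟨κ, hκ, hκ'⟩ : ∃ κ : ℝ, 0 < κ ∧ ∀ p ∈ Icc (-R2) R1 ×ˢ C,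
        κ ≤ -deriv (fun s' => U s' p.2) p.1 := by
      rcases (Icc (-R2) R1 ×ˢ C).eq_empty_or_nonempty with h | h
      · exact ⟨1, one_pos, by simp [h]⟩
      · obtain ⟨p, hp, hmin⟩ := hcpt.exists_isMinOn h hdc.neg.continuousOn
        exact ⟨-deriv (fun s' => U s' p.2) p.1, by linarith [hUdec p.1 p.2], fun q hq => hmin hq⟩
    refine ⟨c * κ, by positivity, ?_⟩
    have hall : ∀ x, ∀ s, a ≤ U s x → U s x ≤ b → κ ≤ -deriv (fun s' => U s' x) s := by
      refine hCP _ ?_ ?_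
      · intro i x
        simp only [hUper]
      · intro x hx s h1 h2
        refine hκ' (s, x) ⟨⟨?_, ?_⟩, hx⟩
        · by_contra h
          push Not at h
          have := hR2 s x h.le
          linarith
        · by_contra h
          push Not at h
          have := hR1 s x h.le
          linarith
    intro t x h1 h2
    rw [hP]
    exact mul_le_mul_of_nonneg_left (hall x _ h1 h2) hc.le
  · intro ε hε
    obtain ⟨R, hR⟩ := htop ε hε
    exact ⟨R, fun t x h => hR _ _ h⟩
  · intro ε hε
    obtain ⟨R, hR⟩ := hbot ε hε
    exact ⟨R, fun t x h => hR _ _ h⟩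

lemma upper_bound {d : ℕ} (f : Euc d → ℝ → ℝ) (L : ℝ) (hL : 0 ≤ L)
    (hlip : ∀ x : Euc d, ∀ u u' : ℝ, u ∈ Icc (0:ℝ) 1 → u' ∈ Icc (0:ℝ) 1 →
      |f x u - f x u'| ≤ L * |u - u'|)
    (θ θ' : ℝ) (hθ : θ ∈ Ioo (0:ℝ) (1/2)) (hθ' : 0 < θ')
    (hign : ∀ x : Euc d, ∀ u ∈ Icc (0:ℝ) θ', f x u = 0)
    (hmono : ∀ x : Euc d, AntitoneOn (fun u => f x u) (Ioo (1-θ) 1))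
    (e : Euc d) (he : ⟪e, e⟫ = 1) (c : ℝ) (hc : 0 < c)
    (W : ℝ → Euc d → ℝ) (hW : FrontW f e c W) (μ : ℝ) (hμ : 0 < μ) :
    ∃ qb : ℝ, 0 < qb ∧ ∀ q ∈ Ioc (0:ℝ) qb, ∀ (g : Euc d → ℝ) (u : ℝ → Euc d → ℝ),
      IsSolR f g u → (∀ x, 0 < ⟪x, e⟫ → ContinuousAt g x ∧ g x ≤ q) →
      ∀ ε : ℝ, 0 < ε → ∃ T : ℝ, ∀ t ≥ T, ∀ k : Euc d, μ ≤ ⟪k, e⟫ →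
        u t (t • (c • e + k)) ≤ q + ε := by
  obtain ⟨hθ0, hθ1⟩ := hθ
  obtain ⟨κ, hκ, hκ'⟩ := hW.kappa (θ'/2) (1 - θ/2) (by positivity) (by linarith)
  refine ⟨min (θ'/2) (κ * μ / (2 * c * (L + 1))), by positivity, ?_⟩
  rintro q ⟨hq0, hq⟩ g u hu hg ε hε
  have hq1 : q ≤ θ'/2 := hq.trans (min_le_left _ _)
  have hq2 : q ≤ κ * μ / (2 * c * (L + 1)) := hq.trans (min_le_right _ _)
  set A : ℝ := L * q / κ with hA
  have hA0 : 0 ≤ A := by positivity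
  have hAκ : A * κ = L * q := by rw [hA]; field_simp
  have hcA : c * A ≤ μ / 2 := by
    rw [le_div_iff₀ (by positivity)] at hq2
    have h1 : c * A * 2 * κ ≤ μ * κ := by
      have : c * A * 2 * κ = 2 * c * L * q := by linear_combination 2 * c * hAκ
      rw [this]
      have : 0 ≤ q * c := by positivity
      nlinarith
    have := le_of_mul_le_mul_right h1 hκ
    linarith
  obtain ⟨R, hR⟩ := hW.bot q hq0
  set τ0 : ℝ := (R + 1) / c with hτ0
  have hcτ0 : c * τ0 = R + 1 := by rw [hτ0]; field_simp
  set τ : ℝ → ℝ := fun t => (1 + A) * t + τ0 with hτ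
  have hτd : ∀ t, HasDerivAt τ (1 + A) t := by
    intro t
    exact (((hasDerivAt_id t).const_mul (1 + A)).add_const τ0).congr_deriv (by ring)
  have hcomp : ∀ t x, 0 < t → 0 ≤ W (τ t) x + q - u t x := by
    refine maxprin (fun t x => W (τ t) x + q - u t x)
      (fun t x => (lap (W (τ t)) x + f x (W (τ t) x)) * (1 + A) - (lap (u t) x + f x (u t x)))
      L 1 hL zero_le_one ?_ ?_ ?_ ?_ ?_ ?_
    · intro t x ht
      have h1 := (hu.mem_Icc t x ht.le).2
      have h2 := (hW.range (τ t) x).1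
      linarith
    · refine ContinuousOn.sub (Continuous.continuousOn ?_) hu.contOn
      have : Continuous fun p : ℝ × Euc d => (τ p.1, p.2) := by fun_prop
      exact (hW.cont.comp this).add continuous_const
    · intro t ht
      exact ((hW.c2 _).add contDiff_const).sub (hu.spatial t ht)
    · intro t x ht
      have h1 := HasDerivAt.comp t (hW.eqn (τ t) x) (hτd t)
      exact (h1.add_const q).sub (hu.eqn t x ht)
    · intro t x ht hneg
      rw [lap_add_const_sub _ _ (hW.c2 _) (hu.spatial t ht)]
      have hur := hu.mem_Icc t x ht.le
      have hWr := hW.range (τ t) x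
      have hpos := hW.pos (τ t) x
      have hk := hκ' (τ t) x
      set w := W (τ t) x
      set P := lap (W (τ t)) x + f x w with hP
      have hV1 : w + q < 1 := by linarith [hur.2]
      have hVm : w + q ∈ Icc (0:ℝ) 1 := ⟨by linarith [hWr.1], hV1.le⟩
      have hwm : w ∈ Icc (0:ℝ) 1 := ⟨hWr.1.le, hWr.2.le⟩
      have h1 : L * (w + q - u t x) ≤ f x (w + q) - f x (u t x) := by
        have := hlip x (w + q) (u t x) hVm hur
        rw [abs_of_neg hneg] at this
        have := (abs_le.1 this).1
        linarith
      have h2 : f x (w + q) ≤ f x w + A * P := by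
        have hAP : 0 ≤ A * P := by positivity
        rcases le_or_gt w (θ'/2) with h | h
        · rw [hign x w ⟨hWr.1.le, by linarith⟩, hign x (w + q) ⟨by linarith [hWr.1], by linarith⟩]
          linarith
        rcases le_or_gt (1 - θ/2) w with h' | h'
        · have := hmono x (a := w) (b := w + q) ⟨by linarith, by linarith⟩
            ⟨by linarith, by linarith⟩ (by linarith)
          simp only at this
          linarith
        · have hk' := hk h.le h'.le
          have h3 := hlip x (w + q) w hVm hwm
          rw [add_sub_cancel_left, abs_of_pos hq0] at h3
          have h4 := (abs_le.1 h3).2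
          nlinarith
      linarith
    · intro x0 η hη
      rcases le_or_gt ⟪x0, e⟫ 0 with h | h
      · have h1 : ∀ᶠ t in 𝓝[>] (0:ℝ), 0 < t := self_mem_nhdsWithin
        have hc' : Continuous fun x : Euc d => ⟪x, e⟫ := by fun_prop
        have h2 : ∀ᶠ x in 𝓝 x0, ⟪x, e⟫ < 1 :=
          hc'.continuousAt.eventually_lt_const (by linarith)
        filter_upwards [h1.prod_mk h2] with p hp
        have hWb := hR (τ p.1) p.2 (by
          simp only [hτ]
          have : 0 ≤ c * ((1 + A) * p.1) := by
            have := hp.1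
            positivity
          nlinarith [hp.2])
        have := (hu.mem_Icc p.1 p.2 hp.1.le).2
        linarith
      · obtain ⟨hgc, hgq⟩ := hg x0 h
        have h1 := (hu.initLim x0 hgc).eventually_lt_const (show g x0 < q + η by linarith)
        filter_upwards [h1] with p hp
        linarith [(hW.range (τ p.1) p.2).1]
  obtain ⟨R', hR'⟩ := hW.top ε hε
  refine ⟨max 1 (2 * (R' + c * τ0) / μ), fun t ht k hk => ?_⟩
  have ht1 : 1 ≤ t := (le_max_left _ _).trans ht
  have ht2 : 2 * (R' + c * τ0) / μ ≤ t := (le_max_right _ _).trans ht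
  rw [div_le_iff₀ hμ] at ht2
  have h1 := hcomp t (t • (c • e + k)) (by linarith)
  have h2 : ⟪t • (c • e + k), e⟫ = t * (c + ⟪k, e⟫) := by
    rw [real_inner_smul_left, inner_add_left, real_inner_smul_left, he, mul_one]
  have h3 := hR' (τ t) (t • (c • e + k)) (by
    rw [h2]
    simp only [hτ]
    nlinarith)
  linarith

set_option maxHeartbeats 1000000 in
lemma lower_bound {d : ℕ} (f : Euc d → ℝ → ℝ) (L : ℝ) (hL : 0 ≤ L)
    (hlip : ∀ x : Euc d, ∀ u u' : ℝ, u ∈ Icc (0:ℝ) 1 → u' ∈ Icc (0:ℝ) 1 →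
      |f x u - f x u'| ≤ L * |u - u'|)
    (hnonneg : ∀ x, ∀ u ∈ Icc (0:ℝ) 1, 0 ≤ f x u) (hf1 : ∀ x, f x 1 = 0)
    (θ θ' : ℝ) (hθ : θ ∈ Ioo (0:ℝ) (1/2)) (hθ' : 0 < θ')
    (hign : ∀ x : Euc d, ∀ u ∈ Icc (0:ℝ) θ', f x u = 0)
    (hmin : ∀ v ∈ Ioo (1-θ) 1, ∃ m : ℝ, 0 < m ∧ ∀ x, m ≤ f x v)
    (hmono : ∀ x : Euc d, AntitoneOn (fun u => f x u) (Ioo (1-θ) 1))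
    (e : Euc d) (he : ⟪e, e⟫ = 1) (c : ℝ) (hc : 0 < c)
    (W : ℝ → Euc d → ℝ) (hW : FrontW f e c W) (μ : ℝ) (hμ : 0 < μ)
    (g : Euc d → ℝ) (u : ℝ → Euc d → ℝ) (hu : IsSolR f g u)
    (hg : ∀ x, ⟪x, e⟫ < 0 → ContinuousAt g x ∧ 1 - θ/2 ≤ g x) (ε : ℝ) (hε : 0 < ε) :
    ∃ T : ℝ, ∀ t ≥ T, ∀ k : Euc d, μ ≤ ⟪k, e⟫ → 1 - ε ≤ u t (t • (c • e - k)) := by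
  obtain ⟨hθ0, hθ1⟩ := hθ
  obtain ⟨κ, hκ, hκ'⟩ := hW.kappa θ' (1 - θ/8) (by positivity) (by linarith)
  obtain ⟨q1, hq10, hq1θ, hq1ε, hq1⟩ : ∃ q1 : ℝ, 0 < q1 ∧ q1 ≤ θ/4 ∧ q1 ≤ ε/4 ∧
      q1 ≤ κ * μ / (2 * c * (L + 1)) :=
    ⟨min (θ/4) (min (ε/4) (κ * μ / (2 * c * (L + 1)))), by positivity, min_le_left _ _,
      (min_le_right _ _).trans (min_le_left _ _), (min_le_right _ _).trans (min_le_right _ _)⟩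
  obtain ⟨m, hm0, hm⟩ := hmin (1 - q1) ⟨by linarith, by linarith⟩
  obtain ⟨δ, hδ0, hδθ, hδm⟩ : ∃ δ : ℝ, 0 < δ ∧ δ ≤ θ/8 ∧ δ ≤ m / (2 * (L + 1)) :=
    ⟨min (θ/8) (m / (2 * (L + 1))), by positivity, min_le_left _ _, min_le_right _ _⟩
  have hLδ : L * δ ≤ m / 2 := by
    rw [le_div_iff₀ (by positivity)] at hδm
    nlinarith
  obtain ⟨κ1, hκ1, hκ1'⟩ := hW.kappa q1 (1 - δ) hq10 (by linarith)
  set q0 : ℝ := 3 * θ / 4 with hq0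
  set ρ : ℝ := m / 2 with hρ
  have hρ0 : 0 < ρ := by positivity
  set A : ℝ := L * q1 / κ with hA
  set B : ℝ := (L + ρ) / κ + ρ / κ1 with hB
  have hA0 : 0 ≤ A := by positivity
  have hB0 : 0 ≤ B := by positivity
  have hAκ : A * κ = L * q1 := by rw [hA]; field_simp
  have hBκ : L + ρ ≤ B * κ := by
    have h1 : (L + ρ) / κ * κ = L + ρ := by field_simp
    have h2 : 0 ≤ ρ / κ1 * κ := by positivity
    rw [hB, add_mul]; linarith
  have hBκ1 : ρ ≤ B * κ1 := by
    have h1 : ρ / κ1 * κ1 = ρ := by field_simp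
    have h2 : 0 ≤ (L + ρ) / κ * κ1 := by positivity
    rw [hB, add_mul]; linarith
  have hcA : c * A ≤ μ / 2 := by
    rw [le_div_iff₀ (by positivity)] at hq1
    have h1 : c * A * 2 * κ ≤ μ * κ := by
      have : c * A * 2 * κ = 2 * c * L * q1 := by linear_combination 2 * c * hAκ
      rw [this]
      have : 0 ≤ q1 * c := by positivity
      nlinarith
    have := le_of_mul_le_mul_right h1 hκ
    linarith
  obtain ⟨R, hR⟩ := hW.top q1 hq10
  set τ0 : ℝ := -(R + 1 + c) / c with hτ0
  have hcτ0 : c * τ0 = -(R + 1 + c) := by rw [hτ0]; field_simp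
  set E : ℝ → ℝ := fun t => Real.exp (-ρ * t) with hE
  have hE0 : ∀ t, 0 < E t := fun t => Real.exp_pos _
  have hE1 : ∀ t, 0 ≤ t → E t ≤ 1 := by
    intro t ht
    simp only [hE]
    rw [Real.exp_le_one_iff]
    nlinarith
  have hEd : ∀ t, HasDerivAt E (-ρ * E t) t := by
    intro t
    have := ((hasDerivAt_id t).const_mul (-ρ)).exp
    simpa [hE, mul_comm] using this
  set τ : ℝ → ℝ := fun t => τ0 + (1 - A) * t + B / ρ * (E t - 1) with hτ
  set q : ℝ → ℝ := fun t => q1 + (q0 - q1) * E t with hq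
  have hEc : Continuous E := by fun_prop
  have hτc : Continuous τ := by fun_prop
  have hqc : Continuous q := by fun_prop
  have hτd : ∀ t, HasDerivAt τ (1 - A - B * E t) t := by
    intro t
    have h1 := (((hasDerivAt_id t).const_mul (1 - A)).const_add τ0).add
      (((hEd t).sub_const 1).const_mul (B / ρ))
    refine h1.congr_deriv ?_
    field_simp
    ring
  have hqd : ∀ t, HasDerivAt q (-(ρ * (q0 - q1) * E t)) t := by
    intro t
    refine (((hEd t).const_mul (q0 - q1)).const_add q1).congr_deriv ?_
    ring
  have hqq : 0 < q0 - q1 := by linarith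
  have hqq1 : q0 - q1 ≤ 1 := by linarith
  have hqge : ∀ t, q1 ≤ q t := by
    intro t
    have := mul_pos hqq (hE0 t)
    simp only [hq]; linarith
  have hqle : ∀ t, q t ≤ q1 + E t := by
    intro t
    have := mul_le_mul_of_nonneg_right hqq1 (hE0 t).le
    simp only [hq]; linarith
  have hqle0 : ∀ t, 0 ≤ t → q t ≤ q0 := by
    intro t ht
    have := mul_le_mul_of_nonneg_left (hE1 t ht) hqq.le
    simp only [hq]; linarith
  have hcomp : ∀ t x, 0 < t → 0 ≤ u t x + q t - W (τ t) x := by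
    refine maxprin (fun t x => u t x + q t - W (τ t) x)
      (fun t x => (lap (u t) x + f x (u t x)) + (-(ρ * (q0 - q1) * E t))
        - (lap (W (τ t)) x + f x (W (τ t) x)) * (1 - A - B * E t))
      L 1 hL zero_le_one ?_ ?_ ?_ ?_ ?_ ?_
    · intro t x ht
      have h1 := (hu.mem_Icc t x ht.le).1
      have h2 := (hW.range (τ t) x).2
      have h3 := hqge t
      linarith
    · refine ContinuousOn.sub (hu.contOn.add (Continuous.continuousOn ?_))
        (Continuous.continuousOn ?_)
      · exact hqc.comp continuous_fst
      · have : Continuous fun p : ℝ × Euc d => (τ p.1, p.2) := by fun_prop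
        exact hW.cont.comp this
    · intro t ht
      exact ((hu.spatial t ht).add contDiff_const).sub (hW.c2 _)
    · intro t x ht
      have h1 := HasDerivAt.comp t (hW.eqn (τ t) x) (hτd t)
      exact ((hu.eqn t x ht).add (hqd t)).sub h1
    · intro t x ht hneg
      rw [lap_add_const_sub _ _ (hu.spatial t ht) (hW.c2 _)]
      have hur := hu.mem_Icc t x ht.le
      have hWr := hW.range (τ t) x
      have hpos := hW.pos (τ t) x
      have hk := hκ' (τ t) x
      have hk1 := hκ1' (τ t) x
      have hqt := hqge t
      have hqt1 := hqle t
      have hqt0 := hqle0 t ht.le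
      have hEt := hE0 t
      have hEt1 := hE1 t ht.le
      set w := W (τ t) x
      set P := lap (W (τ t)) x + f x w with hP
      set Q := q t
      set F := E t
      have hV0 : 0 < w - Q := by linarith [hur.1]
      have hVm : w - Q ∈ Icc (0:ℝ) 1 := ⟨hV0.le, by linarith [hWr.2]⟩
      have hwm : w ∈ Icc (0:ℝ) 1 := ⟨hWr.1.le, hWr.2.le⟩
      have h1 : L * (u t x + Q - w) ≤ f x (u t x) - f x (w - Q) := by
        have := hlip x (u t x) (w - Q) hur hVm
        rw [abs_of_neg (show u t x - (w - Q) < 0 by linarith)] at this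
        have := (abs_le.1 this).1
        linarith
      have hr : ρ * (q0 - q1) * F ≤ ρ * F := by
        have := mul_le_mul_of_nonneg_right hqq1 (mul_pos hρ0 hEt).le
        linarith
      have hAP : 0 ≤ A * P := by positivity
      have hBP : 0 ≤ B * F * P := by positivity
      have h2 : 0 ≤ f x (w - Q) - f x w - ρ * (q0 - q1) * F + (A * P + B * F * P) := by
        rcases lt_or_ge (1 - δ) w with h | h
        · have h3 : f x (1 - q1) ≤ f x (w - Q) :=
            hmono x (a := w - Q) (b := 1 - q1) ⟨by linarith, by linarith [hWr.2]⟩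
              ⟨by linarith, by linarith⟩ (by linarith [hWr.2])
          have h4 := hm x
          have h5 := hlip x w 1 hwm ⟨zero_le_one, le_rfl⟩
          rw [hf1, abs_of_neg (show w - 1 < 0 by linarith [hWr.2])] at h5
          have h6 := (abs_le.1 h5).2
          have h7 : L * -(w - 1) ≤ L * δ := mul_le_mul_of_nonneg_left (by linarith) hL
          have h8 : ρ * F ≤ ρ := mul_le_of_le_one_right hρ0.le hEt1
          linarith
        have hk1' := hk1 (by linarith) h
        have hBF : ρ * F ≤ B * F * P := by
          have h3 : B * F * κ1 ≤ B * F * P :=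
            mul_le_mul_of_nonneg_left hk1' (by positivity)
          have h4 := mul_le_mul_of_nonneg_right hBκ1 hEt.le
          linarith
        rcases le_or_gt (1 - θ/8) w with h' | h'
        · have h3 : f x w ≤ f x (w - Q) :=
            hmono x (a := w - Q) (b := w) ⟨by linarith, by linarith [hWr.2]⟩
              ⟨by linarith, by linarith⟩ (by linarith)
          linarith
        rcases le_or_gt w θ' with h'' | h''
        · rw [hign x w ⟨hWr.1.le, h''⟩]
          have := hnonneg x (w - Q) hVm
          linarith
        · have hk' := hk h''.le h'.le
          have h3 := hlip x (w - Q) w hVm hwm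
          rw [abs_of_neg (show w - Q - w < 0 by linarith)] at h3
          have h4 := (abs_le.1 h3).1
          have h5 : A * κ ≤ A * P := mul_le_mul_of_nonneg_left hk' hA0
          have h6 : B * F * κ ≤ B * F * P := mul_le_mul_of_nonneg_left hk' (by positivity)
          have h7 := mul_le_mul_of_nonneg_right hBκ hEt.le
          have h8 := mul_le_mul_of_nonneg_left hqt1 hL
          linarith
      linarith
    · intro x0 η hη
      have htp : ∀ᶠ t in 𝓝[>] (0:ℝ), t ∈ Ioo (0:ℝ) 1 := Ioo_mem_nhdsGT one_pos
      rcases lt_or_ge ⟪x0, e⟫ 0 with h | h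
      · obtain ⟨hgc, hgq⟩ := hg x0 h
        have h1 := (hu.initLim x0 hgc).eventually_const_lt
          (show 1 - 5 * θ / 8 < g x0 by linarith)
        have hq00 : q 0 = q0 := by simp [hq, hE]
        have h2 : ∀ᶠ t in 𝓝[>] (0:ℝ), 5 * θ / 8 < q t :=
          nhdsWithin_le_nhds
            (hqc.continuousAt.eventually_const_lt (by rw [hq00, hq0]; linarith))
        filter_upwards [h1, h2.prod_inl _] with p hp hp2
        linarith [(hW.range (τ p.1) p.2).2]
      · have hc' : Continuous fun x : Euc d => ⟪x, e⟫ := by fun_prop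
        have h2 : ∀ᶠ x in 𝓝 x0, -1 < ⟪x, e⟫ :=
          hc'.continuousAt.eventually_const_lt (by linarith)
        filter_upwards [htp.prod_mk h2] with p hp
        have hWb := hR (τ p.1) p.2 (by
          have h3 : τ p.1 ≤ τ0 + 1 := by
            simp only [hτ]
            have h4 : B / ρ * (E p.1 - 1) ≤ 0 :=
              mul_nonpos_of_nonneg_of_nonpos (by positivity) (by linarith [hE1 p.1 hp.1.1.le])
            have h5 : 0 ≤ A * p.1 := mul_nonneg hA0 hp.1.1.le
            linarith [hp.1.2]
          have h4 := mul_le_mul_of_nonneg_left h3 hc.le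
          linarith [hp.2])
        have := (hu.mem_Icc p.1 p.2 hp.1.1.le).1
        linarith [hqge p.1]
  obtain ⟨R', hR'⟩ := hW.bot (ε/4) (by positivity)
  obtain ⟨T2, hT2⟩ : ∃ T2 : ℝ, ∀ t ≥ T2, E t < ε / 4 := by
    have h1 : Tendsto E atTop (𝓝 0) := by
      refine Real.tendsto_exp_atBot.comp ?_
      exact tendsto_id.const_mul_atTop_of_neg (by linarith)
    exact Filter.eventually_atTop.1 (h1.eventually_lt_const (by positivity))
  refine ⟨max (max 1 T2) (2 * (R' - c * τ0 + c * (B / ρ)) / μ), fun t ht k hk => ?_⟩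
  have ht1 : 1 ≤ t := ((le_max_left _ _).trans (le_max_left _ _)).trans ht
  have ht3 : T2 ≤ t := ((le_max_right _ _).trans (le_max_left _ _)).trans ht
  have ht2 : 2 * (R' - c * τ0 + c * (B / ρ)) / μ ≤ t := (le_max_right _ _).trans ht
  rw [div_le_iff₀ hμ] at ht2
  have h1 := hcomp t (t • (c • e - k)) (by linarith)
  have h2 : ⟪t • (c • e - k), e⟫ = t * (c - ⟪k, e⟫) := by
    rw [real_inner_smul_left, inner_sub_left, real_inner_smul_left, he, mul_one]
  have h3 := hR' (τ t) (t • (c • e - k)) (by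
    rw [h2]
    have h4 : τ0 + (1 - A) * t - B / ρ ≤ τ t := by
      simp only [hτ]
      have : 0 ≤ B / ρ * E t := mul_nonneg (by positivity) (hE0 t).le
      linarith
    have h5 := mul_le_mul_of_nonneg_left h4 hc.le
    have h6 := mul_le_mul_of_nonneg_left hk (show 0 ≤ t by linarith)
    have h7 := mul_le_mul_of_nonneg_left hcA (show 0 ≤ t by linarith)
    linarith)
  have h4 := hqle t
  have h5 := hT2 t ht3
  linarith

/-- Theorem 1.6a: for periodic ignition reactions, the speed of a pulsating
front in direction `e` is an exclusive front speed in direction `e`. -/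
theorem stmt7 {d : ℕ} (hd1 : 1 ≤ d) (l : Fin d → ℝ) (hl : ∀ i, 0 < l i)
    (f : Euc d → ℝ → ℝ)
    (hlip : ∃ L : ℝ, 0 ≤ L ∧ ∀ x x' : Euc d, ∀ u u' : ℝ, u ∈ Icc (0:ℝ) 1 → u' ∈ Icc (0:ℝ) 1 →
      |f x u - f x' u'| ≤ L * (‖x - x'‖ + |u - u'|))
    (hnonneg : ∀ x, ∀ u ∈ Icc (0:ℝ) 1, 0 ≤ f x u)
    (hper : ∀ i : Fin d, ∀ (x : Euc d) (u : ℝ), f (x + l i • EuclideanSpace.single i 1) u = f x u)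
    (hf0 : ∀ x, f x 0 = 0) (hf1 : ∀ x, f x 1 = 0)
    (θ θ' : ℝ) (hθ : θ ∈ Ioo (0:ℝ) (1/2)) (hθ' : 0 < θ')
    (hign : ∀ x : Euc d, ∀ u ∈ Icc (0:ℝ) θ', f x u = 0)
    (hpos : ∀ x : Euc d, ∀ u ∈ Ioo (1-θ) 1, 0 < f x u)
    (hmono : ∀ x : Euc d, AntitoneOn (fun u => f x u) (Ioo (1-θ) 1))
    (e : Euc d) (he : e ∈ sphere (0:Euc d) 1) (c : ℝ) (hc : 0 < c)
    (U : ℝ → Euc d → ℝ)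
    (hU1 : ContDiff ℝ 1 fun p : ℝ × Euc d => U p.1 p.2)
    (hUper : ∀ i : Fin d, ∀ (s : ℝ) (x : Euc d),
      U s (x + l i • EuclideanSpace.single i 1) = U s x)
    (hUdec : ∀ (s : ℝ) (x : Euc d), deriv (fun s' => U s' x) s < 0)
    (hUrange : ∀ (s : ℝ) (x : Euc d), U s x ∈ Ioo (0:ℝ) 1)
    (hUbot : TendstoUniformly U (fun _ => (1:ℝ)) atBot)
    (hUtop : TendstoUniformly U (fun _ => (0:ℝ)) atTop)
    (hC2 : ∀ t : ℝ, ContDiff ℝ 2 fun x : Euc d => U (⟪x, e⟫ - c * t) x)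
    (heqn : ∀ (t : ℝ) (x : Euc d),
      HasDerivAt (fun s : ℝ => U (⟪x, e⟫ - c * s) x)
        (lap (fun z : Euc d => U (⟪z, e⟫ - c * t) z) x + f x (U (⟪x, e⟫ - c * t) x)) t) :
    (∀ u : ℝ → Euc d → ℝ,
      IsSolR f ({x : Euc d | ⟪x, e⟫ < 0}.indicator fun _ => 1 - θ/2) u →
      ∀ K : Set (Euc d), IsCompact K → K ⊆ {x : Euc d | 0 < ⟪x, e⟫} →
        (∀ ε : ℝ, 0 < ε → ∃ T : ℝ, ∀ t ≥ T, ∀ k ∈ K, 1 - ε ≤ u t (t • (c • e - k))) ∧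
        (∀ ε : ℝ, 0 < ε → ∃ T : ℝ, ∀ t ≥ T, ∀ k ∈ K, u t (t • (c • e + k)) ≤ ε)) ∧
    (∀ K : Set (Euc d), IsCompact K → K ⊆ {x : Euc d | 0 < ⟪x, e⟫} →
      ∃ αK : ℝ, 0 < αK ∧ ∀ α ∈ Ioc (0:ℝ) αK, ∀ u : ℝ → Euc d → ℝ,
        IsSolR f (fun x => if ⟪x, e⟫ < 0 then 1 else α) u →
        ∀ ε : ℝ, 0 < ε → ∃ T : ℝ, ∀ t ≥ T, ∀ k ∈ K, u t (t • (c • e + k)) ≤ α + ε) := by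
  obtain ⟨L, hL, hlip⟩ := hlip
  have hlip' : ∀ x : Euc d, ∀ u u' : ℝ, u ∈ Icc (0:ℝ) 1 → u' ∈ Icc (0:ℝ) 1 →
      |f x u - f x u'| ≤ L * |u - u'| := by
    intro x u u' h h'
    simpa using hlip x x u u' h h'
  have hee : ⟪e, e⟫ = 1 := by
    rw [real_inner_self_eq_norm_sq]
    have : ‖e‖ = 1 := by simpa using he
    rw [this]; norm_num
  have hW := front_mk l hl f e c hc U hU1 hUper hUdec hUrange hUbot hUtop hC2 heqn
  have hμ : ∀ K : Set (Euc d), IsCompact K → K ⊆ {x : Euc d | 0 < ⟪x, e⟫} →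
      ∃ μ : ℝ, 0 < μ ∧ ∀ k ∈ K, μ ≤ ⟪k, e⟫ := by
    intro K hK hKs
    rcases K.eq_empty_or_nonempty with h | h
    · exact ⟨1, one_pos, by simp [h]⟩
    · have hc' : Continuous fun x : Euc d => ⟪x, e⟫ := by fun_prop
      obtain ⟨k, hk, hmin⟩ := hK.exists_isMinOn h hc'.continuousOn
      exact ⟨⟪k, e⟫, hKs hk, fun y hy => hmin hy⟩
  have hmin : ∀ v ∈ Ioo (1-θ) 1, ∃ m : ℝ, 0 < m ∧ ∀ x, m ≤ f x v := by
    intro v hv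
    have hv' : v ∈ Icc (0:ℝ) 1 := ⟨by linarith [hv.1, hθ.2], hv.2.le⟩
    obtain ⟨C, hC, hCP⟩ := per_reduce l hl
    have hcf : Continuous fun x => f x v := by
      have : LipschitzWith ⟨L, hL⟩ fun x => f x v := by
        refine LipschitzWith.of_dist_le_mul fun x y => ?_
        rw [Real.dist_eq, dist_eq_norm]
        have h := hlip x y v v hv' hv'
        rw [sub_self, abs_zero, add_zero] at h
        exact h
      exact this.continuous
    obtain ⟨m, hm, hm'⟩ : ∃ m : ℝ, 0 < m ∧ ∀ x ∈ C, m ≤ f x v := by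
      rcases C.eq_empty_or_nonempty with h | h
      · exact ⟨1, one_pos, by simp [h]⟩
      · obtain ⟨x, hx, hmin⟩ := hC.exists_isMinOn h hcf.continuousOn
        exact ⟨f x v, hpos x v hv, fun y hy => hmin hy⟩
    refine ⟨m, hm, hCP _ ?_ hm'⟩
    intro i x
    rw [hper]
  have hcin : Continuous fun x : Euc d => ⟪x, e⟫ := by fun_prop
  have hposn : ∀ x : Euc d, 0 < ⟪x, e⟫ → ∀ᶠ y in 𝓝 x, 0 < ⟪y, e⟫ := fun x hx =>
    hcin.continuousAt.eventually_const_lt hx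
  have hnegn : ∀ x : Euc d, ⟪x, e⟫ < 0 → ∀ᶠ y in 𝓝 x, ⟪y, e⟫ < 0 := fun x hx =>
    hcin.continuousAt.eventually_lt_const hx
  refine ⟨?_, ?_⟩
  · intro u hu K hK hKs
    obtain ⟨μ, hμ0, hμK⟩ := hμ K hK hKs
    refine ⟨?_, ?_⟩
    · intro ε hε
      obtain ⟨T, hT⟩ := lower_bound f L hL hlip' hnonneg hf1 θ θ' hθ hθ' hign hmin hmono e hee c hc
        _ hW μ hμ0 _ u hu (by
          intro x hx
          refine ⟨?_, ?_⟩
          · refine ContinuousAt.congr (f := fun _ => 1 - θ/2) continuousAt_const ?_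
            filter_upwards [hnegn x hx] with y hy
            rw [indicator_of_mem]
            exact hy
          · rw [indicator_of_mem]
            exact hx) ε hε
      exact ⟨T, fun t ht k hk => hT t ht k (hμK k hk)⟩
    · intro ε hε
      obtain ⟨qb, hqb, hq⟩ := upper_bound f L hL hlip' θ θ' hθ hθ' hign hmono e hee c hc
        _ hW μ hμ0
      obtain ⟨T, hT⟩ := hq (min qb (ε/2)) ⟨by positivity, min_le_left _ _⟩ _ u hu (by
          intro x hx
          refine ⟨?_, ?_⟩
          · refine ContinuousAt.congr (f := fun _ => (0:ℝ)) continuousAt_const ?_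
            filter_upwards [hposn x hx] with y hy
            rw [indicator_of_notMem]
            simpa using hy.le
          · rw [indicator_of_notMem]
            · positivity
            · simpa using hx.le) (ε/2) (by positivity)
      refine ⟨T, fun t ht k hk => ?_⟩
      have h1 := hT t ht k (hμK k hk)
      have h2 := min_le_right qb (ε/2)
      linarith
  · intro K hK hKs
    obtain ⟨μ, hμ0, hμK⟩ := hμ K hK hKs
    obtain ⟨qb, hqb, hq⟩ := upper_bound f L hL hlip' θ θ' hθ hθ' hign hmono e hee c hc
        _ hW μ hμ0
    refine ⟨qb, hqb, fun α hα u hu ε hε => ?_⟩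
    obtain ⟨T, hT⟩ := hq α hα _ u hu (by
          intro x hx
          refine ⟨?_, ?_⟩
          · refine ContinuousAt.congr (f := fun _ => α) continuousAt_const ?_
            filter_upwards [hposn x hx] with y hy
            rw [if_neg (not_lt.2 hy.le)]
          · rw [if_neg (not_lt.2 hx.le)]) ε hε
    exact ⟨T, fun t ht k hk => hT t ht k (hμK k hk)⟩
end
end

section
/- Let d ≥ 1 and let f : ℝ^d × [0,1] → [0,∞) be Lipschitz with constant M ≥ 1 and f(x,0) = f(x,1) = 0 for all x. Set m' := √(M/d) and c' := 2√M·d. If r > 0, y ∈ ℝ^d, and u, u' : [0,∞)×ℝ^d → [0,1] are continuous on [0,∞)×ℝ^d, C^{1,2} on (0,∞)×ℝ^d, both solve w_t = Δw + f(x,w) classically for t > 0, and u(0,x) ≤ u'(0,x) for all x ∈ B_r(y), then u(t,y) ≤ u'(t,y) + c'·e^{−m'(r−c't)} for all t ≥ 0. -/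
open MeasureTheory Metric Set Filter
open scoped Topology

noncomputable section

/-- A classical solution `u : [0,∞)×ℝ^d → [0,1]` of `u_t = Δu + F(x,u)`:
continuous on `[0,∞)×ℝ^d`, `C^{1,2}` and solving the equation classically for `t > 0`. -/
structure IsSolBare {d : ℕ} (F : Euc d → ℝ → ℝ) (u : ℝ → Euc d → ℝ) : Prop where
  mem_Icc : ∀ t x, 0 ≤ t → u t x ∈ Icc (0:ℝ) 1
  contOn : ContinuousOn (fun p : ℝ × Euc d => u p.1 p.2) (Ici 0 ×ˢ univ)
  spatial : ∀ t, 0 < t → ContDiff ℝ 2 (u t)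
  eqn : ∀ t x, 0 < t → HasDerivAt (fun s => u s x) (lap (u t) x + F x (u t x)) t

lemma second_deriv_nonpos (g g1 : ℝ → ℝ) (g2 : ℝ) (h : ∀ s, HasDerivAt g (g1 s) s)
    (h1 : HasDerivAt g1 g2 0) (hmax : ∀ s, g s ≤ g 0) : g2 ≤ 0 := by
  by_contra hc
  push Not at hc
  have hd : deriv g = g1 := funext fun s => (h s).deriv
  have hlm : IsLocalMax g 0 := Filter.Eventually.of_forall hmax
  have e1 : deriv g 0 = 0 := hlm.deriv_eq_zero
  have e2 : 0 < deriv (deriv g) 0 := by rw [hd, h1.deriv]; exact hc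
  have hmin : IsLocalMin g 0 := isLocalMin_of_deriv_deriv_pos e2 e1 (h 0).continuousAt
  have hconst : g =ᶠ[𝓝 0] fun _ => g 0 := by
    filter_upwards [hmin] with s hs
    exact le_antisymm (hmax s) hs
  have e3 : deriv g =ᶠ[𝓝 0] deriv (fun _ : ℝ => g 0) := hconst.deriv
  have e4 := e3.deriv_eq
  simp at e4
  linarith

lemma deriv_nonneg_of_left_max (h : ℝ → ℝ) (D t : ℝ) (ht : 0 < t) (hd : HasDerivAt h D t)
    (hmax : ∀ s, 0 ≤ s → s ≤ t → h s ≤ h t) : 0 ≤ D := by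
  have h1 : Tendsto (slope h t) (𝓝[<] t) (𝓝 D) :=
    (hasDerivAt_iff_tendsto_slope.1 hd).mono_left
      (nhdsWithin_mono _ (fun s hs => ne_of_lt hs))
  refine ge_of_tendsto h1 ?_
  have : Ioo 0 t ∈ 𝓝[<] t := Ioo_mem_nhdsLT ht
  filter_upwards [this] with s hs
  rw [slope_def_field]
  exact div_nonneg_of_nonpos (by linarith [hmax s hs.1.le hs.2.le]) (by linarith [hs.2])

lemma line_d1 {d : ℕ} (φ : Euc d → ℝ) (hφ : ContDiff ℝ 2 φ) (x e : Euc d) (s : ℝ) :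
    HasDerivAt (fun s : ℝ => φ (x + s • e)) (fderiv ℝ φ (x + s • e) e) s := by
  have hl : HasDerivAt (fun s : ℝ => x + s • e) e s := by
    simpa using ((hasDerivAt_id s).smul_const e).const_add x
  exact ((hφ.differentiable (by norm_num)) (x + s • e)).hasFDerivAt.comp_hasDerivAt s hl

lemma line_d2 {d : ℕ} (φ : Euc d → ℝ) (hφ : ContDiff ℝ 2 φ) (x e : Euc d) :
    HasDerivAt (fun s : ℝ => fderiv ℝ φ (x + s • e) e)
      (fderiv ℝ (fun y => fderiv ℝ φ y e) x e) 0 := by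
  have hl : HasDerivAt (fun s : ℝ => x + s • e) e 0 := by
    simpa using ((hasDerivAt_id (0:ℝ)).smul_const e).const_add x
  have hc : ContDiff ℝ 1 (fun y => fderiv ℝ φ y e) :=
    (hφ.fderiv_right (m := 1) (by norm_num)).clm_apply contDiff_const
  have hx : HasFDerivAt (fun y => fderiv ℝ φ y e)
      (fderiv ℝ (fun y => fderiv ℝ φ y e) x) (x + (0:ℝ) • e) := by
    simpa using ((hc.differentiable (by norm_num)) x).hasFDerivAt
  exact hx.comp_hasDerivAt 0 hl

/-- the spatial profile of the barrier -/
def barr {d : ℕ} (l : ℝ) (y x : Euc d) : ℝ := ∑ i : Fin d, 2 * Real.cosh (l * (x i - y i))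

lemma barr_line {d : ℕ} (l : ℝ) (y x : Euc d) (i : Fin d) (s : ℝ) :
    barr l y (x + s • EuclideanSpace.single i 1) =
      barr l y x - 2 * Real.cosh (l * (x i - y i)) + 2 * Real.cosh (l * (x i + s - y i)) := by
  classical
  unfold barr
  rw [← Finset.add_sum_erase _ _ (Finset.mem_univ i),
    ← Finset.add_sum_erase (a := i) Finset.univ (fun j => 2 * Real.cosh (l * (x j - y j)))
      (Finset.mem_univ i)]
  have : ∑ j ∈ Finset.univ.erase i,
      2 * Real.cosh (l * ((x + s • EuclideanSpace.single i (1:ℝ) : Euc d) j - y j)) =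
      ∑ j ∈ Finset.univ.erase i, 2 * Real.cosh (l * (x j - y j)) := by
    refine Finset.sum_congr rfl fun j hj => ?_
    have : j ≠ i := Finset.ne_of_mem_erase hj
    simp [this]
  rw [this]
  simp
  ring

lemma lap_le {d : ℕ} (l A : ℝ) (y x : Euc d) (φ ψ : Euc d → ℝ) (hφ : ContDiff ℝ 2 φ)
    (hψ : ContDiff ℝ 2 ψ)
    (hmax : ∀ z, φ z - ψ z - A * barr l y z ≤ φ x - ψ x - A * barr l y x) :
    lap φ x - lap ψ x ≤ A * l ^ 2 * barr l y x := by
  unfold lap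
  rw [← Finset.sum_sub_distrib]
  conv_rhs => unfold barr
  rw [Finset.mul_sum]
  refine Finset.sum_le_sum fun i _ => ?_
  set e : Euc d := EuclideanSpace.single i 1 with he
  have hlin : ∀ s : ℝ, HasDerivAt (fun s : ℝ => l * (x i + s - y i)) l s := fun s => by
    simpa using (((hasDerivAt_id s).const_add (x i)).sub_const (y i)).const_mul l
  have hb : ∀ s, HasDerivAt (fun s : ℝ => A * barr l y (x + s • e))
      (A * (2 * (Real.sinh (l * (x i + s - y i)) * l))) s := fun s => by
    simp only [he, barr_line]
    exact ((((hlin s).cosh).const_mul 2).const_add _).const_mul A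
  have hb2 : HasDerivAt (fun s : ℝ => A * (2 * (Real.sinh (l * (x i + s - y i)) * l)))
      (A * (2 * (Real.cosh (l * (x i + 0 - y i)) * l * l))) 0 :=
    ((((hlin 0).sinh).mul_const l).const_mul 2).const_mul A
  have := second_deriv_nonpos
    (fun s : ℝ => φ (x + s • e) - ψ (x + s • e) - A * barr l y (x + s • e)) _ _
    (fun s => ((line_d1 φ hφ x e s).sub (line_d1 ψ hψ x e s)).sub (hb s))
    (((line_d2 φ hφ x e).sub (line_d2 ψ hψ x e)).sub hb2)
    (fun s => by simpa using hmax (x + s • e))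
  simp only [add_zero] at this
  nlinarith [this]

lemma barr_nonneg {d : ℕ} (l : ℝ) (y x : Euc d) : 0 ≤ barr l y x :=
  Finset.sum_nonneg fun i _ => by have := Real.cosh_pos (l * (x i - y i)); positivity

lemma barr_big {d : ℕ} (hd1 : 1 ≤ d) (l r : ℝ) (hl : 0 ≤ l) (hr : 0 < r) (y x : Euc d)
    (h : r ≤ dist x y) : Real.exp (l * r / Real.sqrt d) ≤ barr l y x := by
  have hdpos : (0:ℝ) < d := by exact_mod_cast hd1
  have hsd : 0 < Real.sqrt d := Real.sqrt_pos.2 hdpos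
  obtain ⟨i, hi⟩ : ∃ i, r / Real.sqrt d ≤ |x i - y i| := by
    by_contra hc
    push Not at hc
    have h2 : dist x y ^ 2 = ∑ i, (x i - y i) ^ 2 := by
      rw [EuclideanSpace.dist_eq, Real.sq_sqrt (Finset.sum_nonneg fun _ _ => sq_nonneg _)]
      simp [Real.dist_eq, sq_abs]
    have h3 : ∑ i, (x i - y i) ^ 2 < ∑ _i : Fin d, (r / Real.sqrt d) ^ 2 := by
      refine Finset.sum_lt_sum_of_nonempty ⟨⟨0, hd1⟩, Finset.mem_univ _⟩ fun i _ => ?_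
      rw [← sq_abs (x i - y i)]
      exact pow_lt_pow_left₀ (hc i) (abs_nonneg _) (by norm_num)
    have h4 : ∑ _i : Fin d, (r / Real.sqrt d) ^ 2 = r ^ 2 := by
      simp [div_pow, Real.sq_sqrt hdpos.le]
      field_simp
    have h5 : r ^ 2 ≤ dist x y ^ 2 := pow_le_pow_left₀ hr.le h 2
    linarith
  have h1 : 2 * Real.cosh (l * (x i - y i)) ≤ barr l y x :=
    Finset.single_le_sum (f := fun i => 2 * Real.cosh (l * (x i - y i)))
      (fun j _ => by have := Real.cosh_pos (l * (x j - y j)); positivity) (Finset.mem_univ i)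
  refine le_trans ?_ h1
  rw [← Real.cosh_abs, abs_mul, abs_of_nonneg hl, Real.cosh_eq]
  have h6 : l * r / Real.sqrt d ≤ l * |x i - y i| := by
    rw [mul_div_assoc]; exact mul_le_mul_of_nonneg_left hi hl
  have := Real.exp_le_exp.2 h6
  have := Real.exp_pos (-(l * |x i - y i|))
  linarith

lemma barr_cont {d : ℕ} (l : ℝ) (y : Euc d) : Continuous (barr l y) := by
  unfold barr
  fun_prop

/-- Lemma 2.2: finite speed of propagation of perturbations, with explicit
constants `m' = √(M/d)` and `c' = 2√M·d`. -/
theorem stmt9 {d : ℕ} (hd1 : 1 ≤ d)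
    (f : Euc d → ℝ → ℝ) (M : ℝ) (hM : 1 ≤ M)
    (hlip : ∀ x x' : Euc d, ∀ v v' : ℝ, v ∈ Icc (0:ℝ) 1 → v' ∈ Icc (0:ℝ) 1 →
      |f x v - f x' v'| ≤ M * (‖x - x'‖ + |v - v'|))
    (hnonneg : ∀ x : Euc d, ∀ v ∈ Icc (0:ℝ) 1, 0 ≤ f x v)
    (hf0 : ∀ x, f x 0 = 0) (hf1 : ∀ x, f x 1 = 0)
    (r : ℝ) (hr : 0 < r) (y : Euc d)
    (u u' : ℝ → Euc d → ℝ) (hu : IsSolBare f u) (hu' : IsSolBare f u')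
    (h0 : ∀ x ∈ ball y r, u 0 x ≤ u' 0 x) :
    ∀ t : ℝ, 0 ≤ t →
      u t y ≤ u' t y + (2 * Real.sqrt M * d) *
        Real.exp (-(Real.sqrt (M / d) * (r - (2 * Real.sqrt M * d) * t))) := by
  intro t ht
  have hM0 : 0 ≤ M := by linarith
  have hdpos : (0:ℝ) < d := by exact_mod_cast hd1
  have hd1' : (1:ℝ) ≤ d := by exact_mod_cast hd1
  set l := Real.sqrt M with hl
  have hl0 : 0 ≤ l := Real.sqrt_nonneg _
  have hl2 : l ^ 2 = M := Real.sq_sqrt hM0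
  have hl1 : 1 ≤ l := by rw [hl]; exact Real.one_le_sqrt.2 hM
  have hsd1 : 1 ≤ Real.sqrt d := Real.one_le_sqrt.2 hd1'
  set A := Real.exp (-(l * r / Real.sqrt d)) with hA
  have hA0 : 0 < A := Real.exp_pos _
  have key : u t y - u' t y - A * Real.exp (2 * M * t) * barr l y y ≤ 0 := by
    by_contra hc
    push Not at hc
    set z : ℝ × Euc d → ℝ := fun p =>
      u p.1 p.2 - u' p.1 p.2 - A * Real.exp (2 * M * p.1) * barr l y p.2 with hz
    set Z : ℝ × Euc d → ℝ := fun p => Real.exp (-((M + 1) * p.1)) * z p with hZ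
    have hout : ∀ s x, 0 ≤ s → x ∉ ball y r → z (s, x) ≤ 0 := by
      intro s x hs hx
      have hx' : r ≤ dist x y := by simpa [mem_ball] using hx
      have h1 := barr_big hd1 l r hl0 hr y x hx'
      have h2 : 1 ≤ A * barr l y x := by
        have : A * Real.exp (l * r / Real.sqrt d) = 1 := by
          rw [hA, ← Real.exp_add]; simp
        rw [← this]
        exact mul_le_mul_of_nonneg_left h1 hA0.le
      have h3 : 1 ≤ Real.exp (2 * M * s) := Real.one_le_exp (by positivity)
      have h4 := (hu.mem_Icc s x hs).2
      have h5 := (hu'.mem_Icc s x hs).1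
      have h6 : 1 ≤ A * Real.exp (2 * M * s) * barr l y x := by
        nlinarith
      simp only [hz]
      linarith
    have hcomp : IsCompact (Icc 0 t ×ˢ closedBall y r) :=
      isCompact_Icc.prod (isCompact_closedBall y r)
    have hsub : Icc 0 t ×ˢ closedBall y r ⊆ Ici (0:ℝ) ×ˢ (univ : Set (Euc d)) :=
      prod_mono (fun s hs => hs.1) (subset_univ _)
    have hcontz : ContinuousOn Z (Icc 0 t ×ˢ closedBall y r) := by
      have hb := barr_cont l y
      refine ContinuousOn.mul (by fun_prop) (((hu.contOn.mono hsub).sub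
        (hu'.contOn.mono hsub)).sub ?_)
      exact Continuous.continuousOn (by fun_prop)
    have hmemy : (t, y) ∈ Icc 0 t ×ˢ closedBall y r :=
      ⟨⟨ht, le_refl t⟩, mem_closedBall_self hr.le⟩
    obtain ⟨⟨t1, x1⟩, hp, hpmax⟩ := hcomp.exists_isMaxOn ⟨_, hmemy⟩ hcontz
    have hZy : 0 < Z (t, y) := mul_pos (Real.exp_pos _) hc
    have hZp : 0 < Z (t1, x1) := lt_of_lt_of_le hZy (hpmax hmemy)
    have hzp : 0 < z (t1, x1) := (mul_pos_iff_of_pos_left (Real.exp_pos _)).1 hZp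
    have ht1 : 0 ≤ t1 := hp.1.1
    have hball : x1 ∈ ball y r := by
      by_contra hx
      exact absurd (hout t1 x1 ht1 hx) (not_le.2 hzp)
    have ht1pos : 0 < t1 := by
      rcases ht1.lt_or_eq with h | h
      · exact h
      · exfalso
        have h1 := h0 x1 hball
        have h2 : 0 ≤ A * Real.exp (2 * M * t1) * barr l y x1 :=
          mul_nonneg (by positivity) (barr_nonneg _ _ _)
        simp only [hz] at hzp
        rw [← h] at hzp h2
        linarith
    have hspace : ∀ x, z (t1, x) ≤ z (t1, x1) := by
      intro x
      by_cases hx : x ∈ ball y r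
      · have : Z (t1, x) ≤ Z (t1, x1) := hpmax ⟨hp.1, ball_subset_closedBall hx⟩
        exact le_of_mul_le_mul_left this (Real.exp_pos _)
      · exact (hout t1 x ht1 hx).trans hzp.le
    have hlap := lap_le l (A * Real.exp (2 * M * t1)) y x1 (u t1) (u' t1)
      (hu.spatial t1 ht1pos) (hu'.spatial t1 ht1pos) hspace
    have hE : HasDerivAt (fun s : ℝ => A * Real.exp (2 * M * s) * barr l y x1)
        (A * (Real.exp (2 * M * t1) * (2 * M)) * barr l y x1) t1 := by
      have : HasDerivAt (fun s : ℝ => 2 * M * s) (2 * M) t1 := by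
        simpa using (hasDerivAt_id t1).const_mul (2 * M)
      exact (this.exp.const_mul A).mul_const _
    have hE2 : HasDerivAt (fun s : ℝ => Real.exp (-((M + 1) * s)))
        (Real.exp (-((M + 1) * t1)) * (-(M + 1))) t1 := by
      have : HasDerivAt (fun s : ℝ => -((M + 1) * s)) (-(M + 1)) t1 := by
        have h := ((hasDerivAt_id t1).const_mul (M + 1)).neg
        rw [mul_one] at h
        exact h
      exact this.exp
    have hder := hE2.mul (((hu.eqn t1 x1 ht1pos).sub (hu'.eqn t1 x1 ht1pos)).sub hE)
    have hD := deriv_nonneg_of_left_max _ _ t1 ht1pos hder (fun s hs hs1 =>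
      hpmax (a := (s, x1)) ⟨⟨hs, hs1.trans hp.1.2⟩, hp.2⟩)
    have hfl := (abs_le.1 (hlip x1 x1 (u t1 x1) (u' t1 x1) (hu.mem_Icc t1 x1 ht1)
      (hu'.mem_Icc t1 x1 ht1))).2
    have hBn : 0 ≤ A * Real.exp (2 * M * t1) * barr l y x1 :=
      mul_nonneg (by positivity) (barr_nonneg _ _ _)
    have hw : 0 ≤ u t1 x1 - u' t1 x1 := by
      simp only [hz] at hzp
      linarith
    rw [sub_self, norm_zero, zero_add, abs_of_nonneg hw] at hfl
    rw [hl2] at hlap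
    simp only [hz] at hzp
    have hex := Real.exp_pos (-((M + 1) * t1))
    simp only [Pi.sub_apply] at hD
    rw [mul_assoc, ← mul_add] at hD
    have hD' := nonneg_of_mul_nonneg_right hD hex
    nlinarith
  have hby : barr l y y = 2 * d := by
    simp [barr, mul_comm]
  rw [hby] at key
  have hexp : A * Real.exp (2 * M * t) ≤
      Real.exp (-(Real.sqrt (M / d) * (r - (2 * l * d) * t))) := by
    rw [hA, ← Real.exp_add]
    apply Real.exp_le_exp.2
    rw [Real.sqrt_div hM0, ← hl]
    have hs : Real.sqrt d * Real.sqrt d = d := Real.mul_self_sqrt hdpos.le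
    have e : l / Real.sqrt d * (r - 2 * l * d * t) =
        l * r / Real.sqrt d - 2 * M * t * Real.sqrt d := by
      have : Real.sqrt d ≠ 0 := by positivity
      rw [← hl2]
      field_simp
      rw [sq, hs]
      ring
    rw [e]
    have : 2 * M * t * 1 ≤ 2 * M * t * Real.sqrt d :=
      mul_le_mul_of_nonneg_left hsd1 (by positivity)
    linarith
  have hpos := Real.exp_pos (-(Real.sqrt (M / d) * (r - (2 * l * d) * t)))
  set E := Real.exp (-(Real.sqrt (M / d) * (r - (2 * l * d) * t)))
  have k1 : A * Real.exp (2 * M * t) * (2 * d) ≤ E * (2 * d) :=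
    mul_le_mul_of_nonneg_right hexp (by positivity)
  have k2 : (2 * d) * E ≤ 2 * l * d * E := by
    apply mul_le_mul_of_nonneg_right _ hpos.le
    nlinarith
  linarith
end
end

section
/- Let d ≥ 1, M ≥ 1, r > 0, and let {e_j}_{j=1}^d be the standard basis of ℝ^d. Define W : ℝ×ℝ^d → ℝ by W(t,x) := Σ_{j=1}^d [ e^{−√M(x·e_j + r·d^{−1/2} − 2√M·t)} + e^{−√M(−x·e_j + r·d^{−1/2} − 2√M·t)} ]. Then: (a) W is smooth and satisfies ∂_t W = ΔW + M·W at every (t,x) ∈ ℝ×ℝ^d; (b) W(0,x) ≥ 1 whenever |x| ≥ r; and (c) with m' := √(M/d) and c' := 2√M·d, W(t,0) ≤ c'·e^{−m'(r−c't)} for all t ≥ 0. -/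
open MeasureTheory Metric Set Filter
open scoped Topology

noncomputable section

/-- The explicit supersolution
`W(t,x) = Σ_j [exp(−√M(x_j + r/√d − 2√M t)) + exp(−√M(−x_j + r/√d − 2√M t))]`. -/
def Wfun (d : ℕ) (M r : ℝ) (t : ℝ) (x : Euc d) : ℝ :=
  ∑ j : Fin d,
    (Real.exp (-(Real.sqrt M * (x j + r / Real.sqrt d - 2 * Real.sqrt M * t))) +
      Real.exp (-(Real.sqrt M * (-(x j) + r / Real.sqrt d - 2 * Real.sqrt M * t))))

lemma hasF1 {d : ℕ} (s k l : ℝ) (j : Fin d) (y : Euc d) :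
    HasFDerivAt (fun y : Euc d => Real.exp (-(s * (y j + k - l))))
      ((-s * Real.exp (-(s * (y j + k - l)))) • (EuclideanSpace.proj j : Euc d →L[ℝ] ℝ)) y := by
  have h : HasFDerivAt (fun y : Euc d => y j) (EuclideanSpace.proj j : Euc d →L[ℝ] ℝ) y :=
    (EuclideanSpace.proj j : Euc d →L[ℝ] ℝ).hasFDerivAt
  refine (((((h.add_const k).sub_const l).const_mul s).fun_neg).exp).congr_fderiv ?_
  ext v
  simp
  ring

lemma hasF2 {d : ℕ} (s k l : ℝ) (j : Fin d) (y : Euc d) :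
    HasFDerivAt (fun y : Euc d => Real.exp (-(s * (-(y j) + k - l))))
      ((s * Real.exp (-(s * (-(y j) + k - l)))) • (EuclideanSpace.proj j : Euc d →L[ℝ] ℝ)) y := by
  have h : HasFDerivAt (fun y : Euc d => y j) (EuclideanSpace.proj j : Euc d →L[ℝ] ℝ) y :=
    (EuclideanSpace.proj j : Euc d →L[ℝ] ℝ).hasFDerivAt
  refine (((((h.fun_neg.add_const k).sub_const l).const_mul s).fun_neg).exp).congr_fderiv ?_
  ext v
  simp
  ring

lemma fderiv_W {d : ℕ} (M r t : ℝ) (i : Fin d) (y : Euc d) :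
    fderiv ℝ (Wfun d M r t) y (EuclideanSpace.single i 1) =
      -Real.sqrt M * Real.exp (-(Real.sqrt M * (y i + r / Real.sqrt d - 2 * Real.sqrt M * t))) +
      Real.sqrt M *
        Real.exp (-(Real.sqrt M * (-(y i) + r / Real.sqrt d - 2 * Real.sqrt M * t))) := by
  have h : HasFDerivAt (Wfun d M r t) _ y := HasFDerivAt.fun_sum (u := Finset.univ)
    (fun j _ => (hasF1 (Real.sqrt M) (r / Real.sqrt d) (2 * Real.sqrt M * t) j y).add
      (hasF2 (Real.sqrt M) (r / Real.sqrt d) (2 * Real.sqrt M * t) j y))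
  rw [h.fderiv]
  simp [Finset.sum_add_distrib]

lemma lap_W {d : ℕ} (M r t : ℝ) (hM : 0 ≤ M) (x : Euc d) :
    lap (Wfun d M r t) x = M * Wfun d M r t x := by
  unfold lap
  simp only [fderiv_W]
  conv_rhs => unfold Wfun
  rw [Finset.mul_sum]
  refine Finset.sum_congr rfl fun i _ => ?_
  rw [(((hasF1 (Real.sqrt M) (r / Real.sqrt d) (2 * Real.sqrt M * t) i x).const_mul
    (-Real.sqrt M)).fun_add
    ((hasF2 (Real.sqrt M) (r / Real.sqrt d) (2 * Real.sqrt M * t) i x).const_mul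
    (Real.sqrt M))).fderiv]
  have hs := Real.mul_self_sqrt hM
  simp
  linear_combination (Real.exp (-(Real.sqrt M * (x i + r / Real.sqrt d - 2 * Real.sqrt M * t))) +
    Real.exp (-(Real.sqrt M * (-(x i) + r / Real.sqrt d - 2 * Real.sqrt M * t)))) * hs

lemma hasT (s z k t : ℝ) : HasDerivAt (fun t => Real.exp (-(s * (z + k - 2 * s * t))))
    (2 * (s * s) * Real.exp (-(s * (z + k - 2 * s * t)))) t := by
  convert (((((hasDerivAt_id' t).const_mul (2 * s)).const_sub (z + k)).const_mul s).fun_neg).exp using 1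
  simp
  ring

/-- the explicit function `W` is smooth, solves `W_t = ΔW + M·W`, dominates `1`
at time `0` outside `B_r(0)`, and satisfies the exponential bound at the origin. -/
theorem stmt10 {d : ℕ} (hd1 : 1 ≤ d) (M r : ℝ) (hM : 1 ≤ M) (hr : 0 < r) :
    (ContDiff ℝ (⊤ : ℕ∞) fun p : ℝ × Euc d => Wfun d M r p.1 p.2) ∧
    (∀ (t : ℝ) (x : Euc d),
      HasDerivAt (fun s => Wfun d M r s x) (lap (Wfun d M r t) x + M * Wfun d M r t x) t) ∧
    (∀ x : Euc d, r ≤ ‖x‖ → 1 ≤ Wfun d M r 0 x) ∧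
    (∀ t : ℝ, 0 ≤ t →
      Wfun d M r t 0 ≤ (2 * Real.sqrt M * d) *
        Real.exp (-(Real.sqrt (M / d) * (r - (2 * Real.sqrt M * d) * t)))) := by
  have hM0 : 0 ≤ M := by linarith
  have hs := Real.mul_self_sqrt hM0
  have hs1 : 1 ≤ Real.sqrt M := Real.one_le_sqrt.mpr hM
  have hdR : (1 : ℝ) ≤ d := by exact_mod_cast hd1
  have hdp : 0 < Real.sqrt d := Real.sqrt_pos.mpr (by linarith)
  refine ⟨?_, ?_, ?_, ?_⟩
  · unfold Wfun
    have h : ∀ j : Fin d, ContDiff ℝ (⊤ : ℕ∞) (fun p : ℝ × Euc d => p.2 j) := fun j =>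
      (EuclideanSpace.proj j : Euc d →L[ℝ] ℝ).contDiff.comp contDiff_snd
    refine ContDiff.sum fun j _ => ?_
    have := h j
    fun_prop
  · intro t x
    rw [lap_W M r t hM0]
    have h : HasDerivAt (fun s => Wfun d M r s x) _ t := HasDerivAt.fun_sum (u := Finset.univ)
      (fun j _ => (hasT (Real.sqrt M) (x j) (r / Real.sqrt d) t).fun_add
        (hasT (Real.sqrt M) (-(x j)) (r / Real.sqrt d) t))
    convert h using 1
    unfold Wfun
    rw [← two_mul, Finset.mul_sum, Finset.mul_sum, hs]
    refine Finset.sum_congr rfl fun i _ => ?_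
    ring
  · intro x hx
    have key : ∃ j : Fin d, r / Real.sqrt d ≤ |x j| := by
      by_contra! hcon
      have h1 : ‖x‖ ^ 2 = ∑ j, (x j) ^ 2 := EuclideanSpace.real_norm_sq_eq x
      have h2 : ∑ j, (x j) ^ 2 < ∑ _j : Fin d, (r / Real.sqrt d) ^ 2 := by
        refine Finset.sum_lt_sum_of_nonempty ⟨⟨0, hd1⟩, Finset.mem_univ _⟩ fun j _ => ?_
        exact sq_lt_sq' (by linarith [(abs_lt.mp (hcon j)).1]) (abs_lt.mp (hcon j)).2
      have h3 : ∑ _j : Fin d, (r / Real.sqrt d) ^ 2 = r ^ 2 := by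
        simp only [Finset.sum_const, Finset.card_univ, Fintype.card_fin, nsmul_eq_mul]
        rw [div_pow, Real.sq_sqrt (by linarith)]
        field_simp
      nlinarith
    obtain ⟨j, hj⟩ := key
    unfold Wfun
    refine le_trans ?_ (Finset.single_le_sum (fun i _ => by positivity) (Finset.mem_univ j))
    rcases le_abs.mp hj with h | h
    · have := Real.one_le_exp (x := -(Real.sqrt M * (-(x j) + r / Real.sqrt d - 2 * Real.sqrt M * 0)))
        (by nlinarith)
      have := Real.exp_pos (-(Real.sqrt M * (x j + r / Real.sqrt d - 2 * Real.sqrt M * 0)))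
      linarith
    · have := Real.one_le_exp (x := -(Real.sqrt M * (x j + r / Real.sqrt d - 2 * Real.sqrt M * 0)))
        (by nlinarith)
      have := Real.exp_pos (-(Real.sqrt M * (-(x j) + r / Real.sqrt d - 2 * Real.sqrt M * 0)))
      linarith
  · intro t ht
    have h0 : Wfun d M r t 0 = (2 * d) *
        Real.exp (-(Real.sqrt M * (r / Real.sqrt d - 2 * Real.sqrt M * t))) := by
      simp [Wfun]
      ring
    rw [h0]
    refine mul_le_mul (by nlinarith) (Real.exp_le_exp.mpr ?_) (Real.exp_pos _).le (by positivity)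
    rw [Real.sqrt_div hM0]
    have hdd : (d : ℝ) = Real.sqrt d * Real.sqrt d := (Real.mul_self_sqrt (by linarith)).symm
    have hd1' : 1 ≤ Real.sqrt d := Real.one_le_sqrt.mpr hdR
    have e1 : Real.sqrt M / Real.sqrt d * (r - 2 * Real.sqrt M * d * t) =
        Real.sqrt M * (r / Real.sqrt d) - 2 * (Real.sqrt M * Real.sqrt M) * Real.sqrt d * t := by
      generalize Real.sqrt d = q at *
      rw [hdd]
      field_simp
    rw [e1, hs]
    have e2 : Real.sqrt M * (r / Real.sqrt d - 2 * Real.sqrt M * t) =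
        Real.sqrt M * (r / Real.sqrt d) - 2 * M * t := by
      linear_combination (-2 * t) * hs
    rw [e2]
    have : 0 ≤ M * t * (Real.sqrt d - 1) := by
      have := sub_nonneg.mpr hd1'
      positivity
    nlinarith
end
end

section
/- Let d ≥ 1, θ₀ ∈ (0,1), and let f₀ : [0,1] → [0,∞) be Lipschitz with f₀(u) = 0 for u ∈ [0,θ₀] ∪ {1} and f₀(u) > 0 for u ∈ (θ₀,1). Then for every β ∈ (θ₀,1) there exists a compactly supported, radially symmetric, continuous function v : ℝ^d → [0,∞) with max v = v(0) = β which satisfies Δv + f₀(v) ≥ 0 in the sense of distributions: for every nonnegative smooth compactly supported φ : ℝ^d → ℝ, ∫_{ℝ^d} v(x)·Δφ(x) dx + ∫_{ℝ^d} f₀(v(x))·φ(x) dx ≥ 0. -/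
open MeasureTheory Metric Set Filter
open scoped Topology NNReal

noncomputable section

lemma aux_cube (t : ℝ) : HasDerivAt (fun t : ℝ => (max t 0)^3) (3 * (max t 0)^2) t := by
  rcases lt_trichotomy t 0 with h | h | h
  · have : (fun t : ℝ => (max t 0)^3) =ᶠ[𝓝 t] fun _ => 0 := by
      filter_upwards [gt_mem_nhds h] with s hs
      simp [max_eq_right hs.le]
    rw [max_eq_right h.le]
    simpa using (hasDerivAt_const t (0:ℝ)).congr_of_eventuallyEq this
  · subst h
    rw [hasDerivAt_iff_isLittleO]
    simp only [max_self, sub_zero, smul_eq_mul]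
    have h2 : (fun x : ℝ => x^3) =o[𝓝 0] fun x : ℝ => x := by
      simpa using Asymptotics.isLittleO_pow_pow (𝕜 := ℝ) (show 1 < 3 by norm_num)
    refine Asymptotics.IsBigO.trans_isLittleO ?_ h2
    refine Asymptotics.IsBigO.of_bound 1 (Eventually.of_forall fun x => ?_)
    rcases le_total x 0 with hx | hx
    · simp [max_eq_right hx]
    · simp [max_eq_left hx]
  · have : (fun t : ℝ => (max t 0)^3) =ᶠ[𝓝 t] fun t => t^3 := by
      filter_upwards [lt_mem_nhds h] with s hs
      simp [max_eq_left (le_of_lt hs)]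
    rw [max_eq_left h.le]
    simpa using (hasDerivAt_pow 3 t).congr_of_eventuallyEq this

lemma aux_sq (t : ℝ) : HasDerivAt (fun t : ℝ => (max t 0)^2) (2 * (max t 0)) t := by
  rcases lt_trichotomy t 0 with h | h | h
  · have : (fun t : ℝ => (max t 0)^2) =ᶠ[𝓝 t] fun _ => 0 := by
      filter_upwards [gt_mem_nhds h] with s hs
      simp [max_eq_right hs.le]
    rw [max_eq_right h.le]
    simpa using (hasDerivAt_const t (0:ℝ)).congr_of_eventuallyEq this
  · subst h
    rw [hasDerivAt_iff_isLittleO]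
    simp only [max_self, sub_zero, smul_eq_mul]
    have h2 : (fun x : ℝ => x^2) =o[𝓝 0] fun x : ℝ => x := by
      simpa using Asymptotics.isLittleO_pow_pow (𝕜 := ℝ) (show 1 < 2 by norm_num)
    refine Asymptotics.IsBigO.trans_isLittleO ?_ h2
    refine Asymptotics.IsBigO.of_bound 1 (Eventually.of_forall fun x => ?_)
    rcases le_total x 0 with hx | hx
    · simp [max_eq_right hx, sq_nonneg]
    · simp [max_eq_left hx]
  · have : (fun t : ℝ => (max t 0)^2) =ᶠ[𝓝 t] fun t => t^2 := by
      filter_upwards [lt_mem_nhds h] with s hs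
      simp [max_eq_left (le_of_lt hs)]
    rw [max_eq_left h.le]
    simpa using (hasDerivAt_pow 2 t).congr_of_eventuallyEq this

lemma aux_Phi (a β : ℝ) (hab : a < β) : ∃ P P1 P2 : ℝ → ℝ,
    (∀ y, HasDerivAt P (P1 y) y) ∧ (∀ y, HasDerivAt P1 (P2 y) y) ∧ Continuous P2 ∧
    (∀ y, 0 ≤ P1 y) ∧ (∀ y ≤ a, P y = y) ∧ (∀ y, β ≤ y → P y = β) ∧
    (∀ y, β < y → P1 y = 0 ∧ P2 y = 0) ∧ (∀ y < a, P2 y = 0) ∧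
    (∀ y, P y ≤ β) ∧ (∀ y, a ≤ y → a ≤ P y) := by
  set P : ℝ → ℝ := fun y => β - (β - y) * (1 - Real.smoothTransition ((y - a) / (β - a))) with hP
  have hba : 0 < β - a := sub_pos.2 hab
  have hc : ContDiff ℝ 2 P := by
    have : ContDiff ℝ 2 (fun y : ℝ => Real.smoothTransition ((y - a) / (β - a))) :=
      Real.smoothTransition.contDiff.comp (by fun_prop)
    rw [hP]; fun_prop
  have hc1 : ContDiff ℝ 1 (deriv P) := ((contDiff_succ_iff_deriv (n := 1)).1 hc).2.2
  have hlow : ∀ y ≤ a, P y = y := fun y hy => by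
    have : Real.smoothTransition ((y - a) / (β - a)) = 0 :=
      Real.smoothTransition.zero_of_nonpos (div_nonpos_of_nonpos_of_nonneg (by linarith) hba.le)
    simp [hP, this]
  have hhigh : ∀ y, β ≤ y → P y = β := fun y hy => by
    have : Real.smoothTransition ((y - a) / (β - a)) = 1 :=
      Real.smoothTransition.one_of_one_le ((one_le_div hba).2 (by linarith))
    simp [hP, this]
  have hle : ∀ y, P y ≤ β := fun y => by
    rcases le_total β y with h | h
    · exact (hhigh y h).le
    · have := Real.smoothTransition.le_one ((y - a) / (β - a))
      have : 0 ≤ (β - y) * (1 - Real.smoothTransition ((y - a) / (β - a))) :=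
        mul_nonneg (by linarith) (by linarith)
      simp only [hP]; linarith
  have hmono : Monotone P := by
    intro x y hxy
    rcases le_total β y with h | h
    · rw [hhigh y h]; exact hle x
    · have h1 := Real.smoothTransition.le_one ((y - a) / (β - a))
      have h2 : Real.smoothTransition ((x - a) / (β - a)) ≤ Real.smoothTransition ((y - a) / (β - a)) :=
        Real.smoothTransition.monotone (by gcongr)
      have : (β - y) * (1 - Real.smoothTransition ((y - a) / (β - a))) ≤
          (β - x) * (1 - Real.smoothTransition ((x - a) / (β - a))) :=
        mul_le_mul (by linarith) (by linarith) (by linarith) (by linarith)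
      simp only [hP]; linarith
  refine ⟨P, deriv P, deriv (deriv P), fun y => (hc.differentiable (by norm_num) y).hasDerivAt,
    fun y => (hc1.differentiable (by norm_num) y).hasDerivAt, hc1.continuous_deriv le_rfl,
    fun y => hmono.deriv_nonneg, hlow, hhigh, ?_, ?_, hle, ?_⟩
  · have key : ∀ y, β < y → deriv P y = 0 := fun y hy => by
      have : P =ᶠ[𝓝 y] fun _ => β := by
        filter_upwards [lt_mem_nhds hy] with s hs using hhigh s (le_of_lt hs)
      rw [this.deriv_eq]; simp
    intro y hy
    refine ⟨key y hy, ?_⟩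
    have : deriv P =ᶠ[𝓝 y] fun _ => 0 := by
      filter_upwards [lt_mem_nhds hy] with s hs using key s hs
    rw [this.deriv_eq]; simp
  · have key : ∀ y < a, deriv P y = 1 := fun y hy => by
      have : P =ᶠ[𝓝 y] fun z => z := by
        filter_upwards [gt_mem_nhds hy] with s hs using hlow s (le_of_lt hs)
      rw [this.deriv_eq]; simp
    intro y hy
    have : deriv P =ᶠ[𝓝 y] fun _ => 1 := by
      filter_upwards [gt_mem_nhds hy] with s hs using key s hs
    rw [this.deriv_eq]; simp
  · intro y hy
    have := hmono hy
    rwa [hlow a le_rfl] at this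
lemma aux_coord {d : ℕ} (x : Euc d) (i : Fin d) :
    HasFDerivAt (fun x : Euc d => x i) (EuclideanSpace.proj (𝕜 := ℝ) i) x :=
  (EuclideanSpace.proj (𝕜 := ℝ) i : Euc d →L[ℝ] ℝ).hasFDerivAt

lemma aux_main {d : ℕ} (q q1 q2 : ℝ → ℝ) (hq : ∀ s, HasDerivAt q (q1 s) s)
    (hq1 : ∀ s, HasDerivAt q1 (q2 s) s) (hq2 : Continuous q2)
    (φ : Euc d → ℝ) (hφ : ContDiff ℝ (⊤ : ℕ∞) φ) (hs : HasCompactSupport φ) :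
    ∫ x : Euc d, q (‖x‖^2) * lap φ x =
      ∫ x : Euc d, (4 * ‖x‖^2 * q2 (‖x‖^2) + 2 * d * q1 (‖x‖^2)) * φ x := by
  have cq : Continuous q := continuous_iff_continuousAt.2 fun s => (hq s).continuousAt
  have cq1 : Continuous q1 := continuous_iff_continuousAt.2 fun s => (hq1 s).continuousAt
  have cn : Continuous (fun x : Euc d => ‖x‖^2) := by fun_prop
  have hv : ∀ x : Euc d, HasFDerivAt (fun x : Euc d => q (‖x‖^2))
      (q1 (‖x‖^2) • (2 • innerSL ℝ x)) x := fun x =>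
    (hq _).comp_hasFDerivAt x (hasStrictFDerivAt_norm_sq x).hasFDerivAt
  have hv1 : ∀ x : Euc d, HasFDerivAt (fun x : Euc d => q1 (‖x‖^2))
      (q2 (‖x‖^2) • (2 • innerSL ℝ x)) x := fun x =>
    (hq1 _).comp_hasFDerivAt x (hasStrictFDerivAt_norm_sq x).hasFDerivAt
  let e : Fin d → Euc d := fun i => EuclideanSpace.single i 1
  have hin : ∀ (x : Euc d) i, innerSL ℝ x (e i) = x i := fun x i => by
    simp [e, EuclideanSpace.inner_single_right]
  have hd1 : ∀ (x : Euc d) i, fderiv ℝ (fun x : Euc d => q (‖x‖^2)) x (e i)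
      = 2 * x i * q1 (‖x‖^2) := fun x i => by
    rw [(hv x).fderiv]
    simp only [smul_apply, hin]
    simp; ring
  have hw : ∀ (x : Euc d) i, HasFDerivAt (fun x : Euc d => 2 * x i * q1 (‖x‖^2))
      ((2 * x i) • (q2 (‖x‖^2) • (2 • innerSL ℝ x)) +
        q1 (‖x‖^2) • ((2:ℝ) • (EuclideanSpace.proj (𝕜 := ℝ) i : Euc d →L[ℝ] ℝ))) x :=
    fun x i => ((aux_coord x i).const_mul 2).mul (hv1 x)
  have hd2 : ∀ (x : Euc d) i, fderiv ℝ (fun x : Euc d => 2 * x i * q1 (‖x‖^2)) x (e i)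
      = 4 * x i ^ 2 * q2 (‖x‖^2) + 2 * q1 (‖x‖^2) := fun x i => by
    rw [(hw x i).fderiv]
    simp only [add_apply, smul_apply, hin]
    simp [e]; ring
  have cφ : ∀ i, ContDiff ℝ (⊤ : ℕ∞) (fun y => fderiv ℝ φ y (e i)) := fun i =>
    (hφ.fderiv_right (m := (⊤ : ℕ∞)) (by simp)).clm_apply contDiff_const
  have sφ : ∀ i, HasCompactSupport (fun y => fderiv ℝ φ y (e i)) := fun i =>
    hs.fderiv_apply (𝕜 := ℝ) (e i)
  have cφ2 : ∀ i, Continuous (fun x => fderiv ℝ (fun y => fderiv ℝ φ y (e i)) x (e i)) := fun i =>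
    (((cφ i).fderiv_right (m := (⊤ : ℕ∞)) (by simp)).clm_apply contDiff_const).continuous
  have sφ2 : ∀ i, HasCompactSupport (fun x => fderiv ℝ (fun y => fderiv ℝ φ y (e i)) x (e i)) :=
    fun i => (sφ i).fderiv_apply (𝕜 := ℝ) (e i)
  have hint : ∀ (g h : Euc d → ℝ), Continuous g → Continuous h → HasCompactSupport h →
      Integrable (fun x => g x * h x) := fun g h cg ch sh =>
    (cg.mul ch).integrable_of_hasCompactSupport (sh.mul_left)
  have c0 : Continuous (fun x : Euc d => q (‖x‖^2)) := cq.comp cn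
  have c1 : ∀ i, Continuous (fun x : Euc d => 2 * x i * q1 (‖x‖^2)) := fun i =>
    continuous_iff_continuousAt.2 fun x => (hw x i).continuousAt
  have c2 : ∀ i, Continuous (fun x : Euc d => 4 * x i ^ 2 * q2 (‖x‖^2) + 2 * q1 (‖x‖^2)) :=
    fun i => by
      have := hq2.comp cn
      have := cq1.comp cn
      simp only [Function.comp_def] at *
      fun_prop
  have step : ∀ i, ∫ x : Euc d, q (‖x‖^2) * fderiv ℝ (fun y => fderiv ℝ φ y (e i)) x (e i)
      = ∫ x : Euc d, (4 * x i ^ 2 * q2 (‖x‖^2) + 2 * q1 (‖x‖^2)) * φ x := by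
    intro i
    rw [integral_mul_fderiv_eq_neg_fderiv_mul_of_integrable]
    · simp only [hd1]
      rw [integral_mul_fderiv_eq_neg_fderiv_mul_of_integrable]
      · simp only [hd2, neg_neg]
      · simp only [hd2]; exact hint _ _ (c2 i) hφ.continuous hs
      · exact hint _ _ (c1 i) (cφ i).continuous (sφ i)
      · exact hint _ _ (c1 i) hφ.continuous hs
      · exact fun x _ => (hw x i).differentiableAt
      · exact fun x _ => hφ.differentiable (by simp) x
    · simp only [hd1]; exact hint _ _ (c1 i) (cφ i).continuous (sφ i)
    · exact hint _ _ c0 (cφ2 i) (sφ2 i)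
    · exact hint _ _ c0 (cφ i).continuous (sφ i)
    · exact fun x _ => (hv x).differentiableAt
    · exact fun x _ => (cφ i).differentiable (by simp) x
  calc _ = ∫ x : Euc d, ∑ i, q (‖x‖^2) * fderiv ℝ (fun y => fderiv ℝ φ y (e i)) x (e i) := by
        simp only [lap, Finset.mul_sum, e]
    _ = ∑ i, ∫ x : Euc d, q (‖x‖^2) * fderiv ℝ (fun y => fderiv ℝ φ y (e i)) x (e i) :=
        integral_finsetSum _ fun i _ => hint _ _ c0 (cφ2 i) (sφ2 i)
    _ = ∑ i, ∫ x : Euc d, (4 * x i ^ 2 * q2 (‖x‖^2) + 2 * q1 (‖x‖^2)) * φ x :=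
        Finset.sum_congr rfl fun i _ => step i
    _ = ∫ x : Euc d, ∑ i, (4 * x i ^ 2 * q2 (‖x‖^2) + 2 * q1 (‖x‖^2)) * φ x :=
        (integral_finsetSum _ fun i _ => hint _ _ (c2 i) hφ.continuous hs).symm
    _ = _ := by
        congr 1; ext x
        rw [← Finset.sum_mul, Finset.sum_add_distrib, ← Finset.sum_mul, ← Finset.mul_sum,
          ← EuclideanSpace.real_norm_sq_eq]
        simp; left; ring

/-- Lemma 2.5: existence of a compactly supported radially symmetric
distributional subsolution `v` of `Δv + f₀(v) ≥ 0` with `max v = v(0) = β` for any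
`β ∈ (θ₀, 1)`. -/
theorem stmt11 {d : ℕ} (hd1 : 1 ≤ d) (θ₀ : ℝ) (hθ₀ : θ₀ ∈ Ioo (0:ℝ) 1)
    (f₀ : ℝ → ℝ) (hlip : ∃ L : ℝ≥0, LipschitzOnWith L f₀ (Icc 0 1))
    (hnonneg : ∀ u ∈ Icc (0:ℝ) 1, 0 ≤ f₀ u)
    (hzero : ∀ u ∈ Icc (0:ℝ) θ₀, f₀ u = 0) (hone : f₀ 1 = 0)
    (hpos : ∀ u ∈ Ioo θ₀ 1, 0 < f₀ u) :
    ∀ β ∈ Ioo θ₀ 1, ∃ v : Euc d → ℝ,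
      HasCompactSupport v ∧ Continuous v ∧
      (∀ x y : Euc d, ‖x‖ = ‖y‖ → v x = v y) ∧
      (∀ x, 0 ≤ v x) ∧ v 0 = β ∧ (∀ x, v x ≤ β) ∧
      ∀ φ : Euc d → ℝ, ContDiff ℝ (⊤ : ℕ∞) φ → HasCompactSupport φ → (∀ x, 0 ≤ φ x) →
        0 ≤ (∫ x : Euc d, v x * lap φ x) + ∫ x : Euc d, f₀ (v x) * φ x := by
  obtain ⟨L, hL⟩ := hlip
  have hfc : ContinuousOn f₀ (Icc 0 1) := hL.continuousOn
  intro β hβ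
  obtain ⟨hβ0, hβ1⟩ := hβ
  obtain ⟨hθ0, hθ1⟩ := hθ₀
  obtain ⟨a, ha0, haβ⟩ := exists_between hβ0
  obtain ⟨P, P1, P2, hP, hP1, cP2, hP1n, hPlow, hPhigh, hPβ, hPa, hPle, hPge⟩ := aux_Phi a β haβ
  have hβpos : 0 < β := hθ0.trans hβ0
  have hapos : 0 < a := hθ0.trans ha0
  -- lower bound for the nonlinearity on `[a, β]`
  obtain ⟨u₀, hu₀, hmin⟩ := isCompact_Icc.exists_isMinOn (nonempty_Icc.2 haβ.le)
    (hfc.mono (Icc_subset_Icc hapos.le hβ1.le))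
  have hc : 0 < f₀ u₀ := hpos u₀ ⟨ha0.trans_le hu₀.1, hu₀.2.trans_lt hβ1⟩
  have hcmin : ∀ u ∈ Icc a β, f₀ u₀ ≤ f₀ u := fun u hu => hmin hu
  set c := f₀ u₀ with hcdef
  -- bound for the second derivative
  obtain ⟨C, hC⟩ := isCompact_Icc.exists_bound_of_continuousOn (s := Icc a β) cP2.continuousOn
  have hC0 : 0 ≤ C := (norm_nonneg _).trans (hC a ⟨le_rfl, haβ.le⟩)
  set k : ℝ := ((d:ℝ) + 4) / 4 with hk
  have hd0 : (0:ℝ) ≤ d := Nat.cast_nonneg d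
  have hk1 : 1 ≤ k := by rw [hk]; linarith
  set K : ℝ := β * k ^ 3 with hK
  have hKβ : β ≤ K := le_mul_of_one_le_right hβpos.le (one_le_pow₀ hk1)
  have hKpos : 0 < K := hβpos.trans_le hKβ
  set ε : ℝ := c / (36 * K ^ 2 * C + 1) with hε
  have hden : 0 < 36 * K ^ 2 * C + 1 := by positivity
  have hεpos : 0 < ε := div_pos hc hden
  have hεc : 36 * ε * K ^ 2 * C ≤ c := by
    have : ε * (36 * K ^ 2 * C + 1) = c := div_mul_cancel₀ _ hden.ne'
    nlinarith
  set m : ℝ → ℝ := fun s => max (1 - ε * s) 0 with hm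
  have hm0 : ∀ s, 0 ≤ m s := fun s => le_max_right _ _
  have cm : Continuous m := by rw [hm]; fun_prop
  have hu : ∀ s : ℝ, HasDerivAt (fun s : ℝ => 1 - ε * s) (-ε) s := fun s => by
    simpa using ((hasDerivAt_id s).const_mul ε).const_sub 1
  have hm3 : ∀ s, HasDerivAt (fun s => K * m s ^ 3) (K * (3 * m s ^ 2 * (-ε))) s := fun s =>
    (HasDerivAt.comp (h₂ := fun t : ℝ => (max t 0) ^ 3) s (aux_cube (1 - ε * s)) (hu s)).const_mul K
  have hm2 : ∀ s, HasDerivAt (fun s => m s ^ 2) (2 * m s * (-ε)) s := fun s =>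
    HasDerivAt.comp (h₂ := fun t : ℝ => (max t 0) ^ 2) s (aux_sq (1 - ε * s)) (hu s)
  let q : ℝ → ℝ := fun s => P (K * m s ^ 3)
  let q1 : ℝ → ℝ := fun s => P1 (K * m s ^ 3) * (K * (3 * m s ^ 2 * (-ε)))
  let q2 : ℝ → ℝ := fun s => P2 (K * m s ^ 3) * (K * (3 * m s ^ 2 * (-ε))) *
    (K * (3 * m s ^ 2 * (-ε))) + P1 (K * m s ^ 3) * (K * (3 * (2 * m s * (-ε)) * (-ε)))
  have hq : ∀ s, HasDerivAt q (q1 s) s := fun s => (hP _).comp s (hm3 s)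
  have hq1 : ∀ s, HasDerivAt q1 (q2 s) s := fun s =>
    ((hP1 _).comp s (hm3 s)).mul ((((hm2 s).const_mul 3).mul_const (-ε)).const_mul K)
  have cP : Continuous P := continuous_iff_continuousAt.2 fun s => (hP s).continuousAt
  have cP1 : Continuous P1 := continuous_iff_continuousAt.2 fun s => (hP1 s).continuousAt
  have cq2 : Continuous q2 := by
    simp only [q2]; fun_prop
  have cq : Continuous q := by
    simp only [q]; fun_prop
  have hP0 : ∀ y, 0 ≤ y → 0 ≤ P y := fun y hy => by
    rcases le_total y a with h | h
    · rw [hPlow y h]; exact hy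
    · exact hapos.le.trans (hPge y h)
  have hy0 : ∀ s, 0 ≤ K * m s ^ 3 := fun s => mul_nonneg hKpos.le (pow_nonneg (hm0 s) 3)
  have hqn : ∀ s, 0 ≤ q s := fun s => hP0 _ (hy0 s)
  have hqβ : ∀ s, q s ≤ β := fun s => hPle _
  have hq01 : ∀ s, q s ∈ Icc (0:ℝ) 1 := fun s => ⟨hqn s, (hqβ s).trans hβ1.le⟩
  have hineq : ∀ s, 0 ≤ s → 0 ≤ 4 * s * q2 s + 2 * d * q1 s + f₀ (q s) := by
    intro s hs
    have hfn := hnonneg _ (hq01 s)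
    have hid : 4 * s * q2 s + 2 * d * q1 s =
        6 * ε * K * P1 (K * m s ^ 3) * m s * (4 * (ε * s) - d * m s)
        + 36 * ε * (ε * s) * K ^ 2 * P2 (K * m s ^ 3) * m s ^ 4 := by
      simp only [q1, q2]; ring
    rw [hid]
    rcases le_or_gt (1 - ε * s) 0 with hneg | hup
    · have : m s = 0 := max_eq_right hneg
      rw [this]; simpa using hfn
    have hms : m s = 1 - ε * s := max_eq_left hup.le
    have hεs : ε * s = 1 - m s := by rw [hms]; ring
    have hεs0 : 0 ≤ ε * s := by positivity
    have hm1 : m s ≤ 1 := by linarith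
    rcases lt_or_ge β (K * m s ^ 3) with hb | hb
    · obtain ⟨e1, e2⟩ := hPβ _ hb
      rw [e1, e2]; simpa using hfn
    have hkm : k * m s ≤ 1 := by
      by_contra! hcon
      have h3 : 1 < (k * m s) ^ 3 := one_lt_pow₀ hcon (by norm_num)
      have : K * m s ^ 3 = β * (k * m s) ^ 3 := by rw [hK]; ring
      rw [this] at hb
      nlinarith
    have hbr : 0 ≤ 4 * (ε * s) - d * m s := by
      rw [hεs]
      have : k * m s = (d * m s + 4 * m s) / 4 := by rw [hk]; ring
      linarith
    have hA : 0 ≤ 6 * ε * K * P1 (K * m s ^ 3) * m s * (4 * (ε * s) - d * m s) := by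
      have := hP1n (K * m s ^ 3)
      have := hm0 s
      positivity
    rcases lt_or_ge (K * m s ^ 3) a with hya | hya
    · rw [hPa _ hya]
      linarith
    have hf : c ≤ f₀ (q s) := hcmin _ ⟨hPge _ hya, hqβ s⟩
    have hP2 : -C ≤ P2 (K * m s ^ 3) := (abs_le.1 (hC _ ⟨hya, hb⟩)).1
    have hm4 : m s ^ 4 ≤ 1 := pow_le_one₀ (hm0 s) hm1
    have hm40 : 0 ≤ m s ^ 4 := pow_nonneg (hm0 s) 4
    have hw1 : (ε * s) * m s ^ 4 ≤ 1 := mul_le_one₀ (by linarith [hm0 s]) hm40 hm4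
    have hw0 : 0 ≤ (ε * s) * m s ^ 4 := mul_nonneg hεs0 hm40
    have hB : -(36 * ε * K ^ 2 * C) ≤ 36 * ε * (ε * s) * K ^ 2 * P2 (K * m s ^ 3) * m s ^ 4 := by
      have h1 : -C ≤ (ε * s) * m s ^ 4 * P2 (K * m s ^ 3) := by nlinarith
      have h2 : 0 ≤ 36 * ε * K ^ 2 := by positivity
      have h3 := mul_le_mul_of_nonneg_left h1 h2
      linarith
    linarith
  have hm00 : m 0 = 1 := by simp [hm]
  refine ⟨fun x => q (‖x‖^2), ?_, ?_, ?_, fun x => hqn _, ?_, fun x => hqβ _, ?_⟩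
  · refine HasCompactSupport.of_support_subset_isCompact
      (isCompact_closedBall (0 : Euc d) (1 / ε + 1)) ?_
    intro x hx
    by_contra hxb
    apply hx
    rw [mem_closedBall_zero_iff, not_le] at hxb
    have h1 : 0 < 1 / ε := by positivity
    have h2 : 1 / ε ≤ ‖x‖^2 := by nlinarith
    have h3 : 1 ≤ ε * ‖x‖^2 := by
      rw [div_le_iff₀ hεpos] at h2; linarith
    have : m (‖x‖^2) = 0 := max_eq_right (by linarith)
    simp only [q, this]
    rw [hPlow _ (by simpa using hapos.le)]; simp
  · exact cq.comp (by fun_prop)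
  · intro x y hxy
    simp only [hxy]
  · simp only [q, norm_zero]
    rw [show (0:ℝ)^2 = 0 by norm_num, hm00]
    exact hPhigh _ (by simpa using hKβ)
  · intro φ hφ hs hφ0
    have cn : Continuous (fun x : Euc d => ‖x‖^2) := by fun_prop
    have cq1 : Continuous q1 := continuous_iff_continuousAt.2 fun s => (hq1 s).continuousAt
    have cf : Continuous (fun x : Euc d => f₀ (q (‖x‖^2))) :=
      hfc.comp_continuous (cq.comp cn) fun x => hq01 _
    have cl : Continuous (fun x : Euc d => 4 * ‖x‖^2 * q2 (‖x‖^2) + 2 * d * q1 (‖x‖^2)) := by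
      have h1 : Continuous (fun x : Euc d => q2 (‖x‖^2)) := cq2.comp cn
      have h2 : Continuous (fun x : Euc d => q1 (‖x‖^2)) := cq1.comp cn
      exact ((continuous_const.mul cn).mul h1).add (continuous_const.mul h2)
    rw [aux_main q q1 q2 hq hq1 cq2 φ hφ hs, ← integral_add]
    · refine integral_nonneg fun x => ?_
      have := mul_nonneg (hineq (‖x‖^2) (sq_nonneg _)) (hφ0 x)
      simp only [Pi.zero_apply]
      linarith
    · exact (cl.mul hφ.continuous).integrable_of_hasCompactSupport hs.mul_left
    · exact (cf.mul hφ.continuous).integrable_of_hasCompactSupport hs.mul_left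
end
end

section
/- Let A ⊆ ℝ^d be open and convex and let t ≥ 0. Then A + tS = ⋂_{e∈S^{d−1}} {x ∈ ℝ^d : x·e < sup_{y∈A} y·e + c*(e)·t} and closure(A + tS) = ⋂_{e∈S^{d−1}} {x ∈ ℝ^d : x·e ≤ sup_{y∈A} y·e + c*(e)·t}, where the suprema are taken in ℝ ∪ {+∞} and a half-space condition with infinite right-hand side is vacuous. -/
open Metric Set Filter
open scoped Topology RealInnerProductSpace Pointwise

noncomputable section

/-- The radial function `w(e) = sup{s ≥ 0 : se ∈ S}` of a set `S`. -/
def radial {d : ℕ} (S : Set (Euc d)) (e : Euc d) : ℝ :=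
  sSup {s : ℝ | 0 ≤ s ∧ s • e ∈ S}

/-- `c*(e) = sup_{e' ∈ S^{d-1}} w(e')(e'·e)`. -/
def cstarOf {d : ℕ} (S : Set (Euc d)) (e : Euc d) : ℝ :=
  sSup {c : ℝ | ∃ e' ∈ sphere (0:Euc d) 1, c = radial S e' * ⟪e', e⟫}

lemma cstar_isLUB {d : ℕ} (S : Set (Euc d)) (hSb : Bornology.IsBounded S)
    (h0S : (0:Euc d) ∈ S) (e : Euc d) (he : e ∈ sphere (0:Euc d) 1) :
    (∀ s ∈ S, ⟪s, e⟫ ≤ cstarOf S e) ∧ ∀ b : ℝ, (∀ s ∈ S, ⟪s, e⟫ ≤ b) → cstarOf S e ≤ b := by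
  obtain ⟨R, hR⟩ := hSb.exists_norm_le
  have he1 : ‖e‖ = 1 := by simpa using he
  have hbd : ∀ e' ∈ sphere (0:Euc d) 1, ∀ s ∈ {s : ℝ | 0 ≤ s ∧ s • e' ∈ S}, s ≤ R := by
    intro e' he' s hs
    have h1 : ‖e'‖ = 1 := by simpa using he'
    have := hR _ hs.2
    rw [norm_smul, h1, mul_one] at this
    exact (le_abs_self s).trans this
  have hbdd : ∀ e' ∈ sphere (0:Euc d) 1, BddAbove {s : ℝ | 0 ≤ s ∧ s • e' ∈ S} :=
    fun e' he' => ⟨R, hbd e' he'⟩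
  have h0mem : ∀ e' : Euc d, (0:ℝ) ∈ {s : ℝ | 0 ≤ s ∧ s • e' ∈ S} := by
    intro e'; simpa using h0S
  have hr0 : ∀ e' ∈ sphere (0:Euc d) 1, 0 ≤ radial S e' :=
    fun e' he' => le_csSup (hbdd e' he') (h0mem e')
  have hrR : ∀ e' ∈ sphere (0:Euc d) 1, radial S e' ≤ R :=
    fun e' he' => csSup_le ⟨0, h0mem e'⟩ (hbd e' he')
  have hCb : BddAbove {c : ℝ | ∃ e' ∈ sphere (0:Euc d) 1, c = radial S e' * ⟪e', e⟫} := by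
    refine ⟨R, ?_⟩
    rintro c ⟨e', he', rfl⟩
    have h1 : ‖e'‖ = 1 := by simpa using he'
    have h2 : ⟪e', e⟫ ≤ 1 := by
      have := real_inner_le_norm e' e
      rwa [h1, he1, mul_one] at this
    have := mul_le_mul_of_nonneg_left h2 (hr0 e' he')
    linarith [hrR e' he']
  have hle : ∀ e' ∈ sphere (0:Euc d) 1, radial S e' * ⟪e', e⟫ ≤ cstarOf S e :=
    fun e' he' => le_csSup hCb ⟨e', he', rfl⟩
  have hc0 : 0 ≤ cstarOf S e := by
    have := hle e he
    rw [real_inner_self_eq_norm_sq, he1] at this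
    linarith [hr0 e he]
  constructor
  · intro s hs
    by_cases hneg : ⟪s, e⟫ ≤ 0
    · exact hneg.trans hc0
    have hs0 : s ≠ 0 := by
      rintro rfl
      simp at hneg
    have hn : 0 < ‖s‖ := norm_pos_iff.2 hs0
    have hsm : ‖s‖ • (‖s‖⁻¹ • s) = s := smul_inv_smul₀ hn.ne' s
    have he' : ‖s‖⁻¹ • s ∈ sphere (0:Euc d) 1 := by
      simp [norm_smul, hn.ne']
    have hrad : ‖s‖ ≤ radial S (‖s‖⁻¹ • s) :=
      le_csSup (hbdd _ he') ⟨hn.le, by rw [hsm]; exact hs⟩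
    refine le_trans ?_ (hle _ he')
    have h3 : ⟪s, e⟫ = ‖s‖ * ⟪‖s‖⁻¹ • s, e⟫ := by
      rw [← real_inner_smul_left, hsm]
    have h4 : 0 ≤ ⟪‖s‖⁻¹ • s, e⟫ := by
      rw [real_inner_smul_left]
      push Not at hneg
      positivity
    rw [h3]
    exact mul_le_mul_of_nonneg_right hrad h4
  · intro b hb
    refine csSup_le ⟨_, e, he, rfl⟩ ?_
    rintro c ⟨e', he', rfl⟩
    have hb0 : 0 ≤ b := by simpa using hb 0 h0S
    by_cases hneg : ⟪e', e⟫ ≤ 0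
    · exact (mul_nonpos_of_nonneg_of_nonpos (hr0 e' he') hneg).trans hb0
    push Not at hneg
    rw [← le_div_iff₀ hneg]
    refine csSup_le ⟨0, h0mem e'⟩ ?_
    intro s hs
    rw [le_div_iff₀ hneg, ← real_inner_smul_left]
    exact hb _ hs.2

lemma sup_add_eq {d : ℕ} (S : Set (Euc d)) (hSb : Bornology.IsBounded S)
    (h0S : (0:Euc d) ∈ S) (A : Set (Euc d)) (t : ℝ) (ht : 0 ≤ t)
    (e : Euc d) (he : e ∈ sphere (0:Euc d) 1) :
    (⨆ y ∈ A, ((⟪y, e⟫ : ℝ) : EReal)) + ((cstarOf S e * t : ℝ) : EReal) =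
      ⨆ y ∈ A + t • S, ((⟪y, e⟫ : ℝ) : EReal) := by
  obtain ⟨h1, h2⟩ := cstar_isLUB S hSb h0S e he
  apply le_antisymm
  · rw [← EReal.le_sub_iff_add_le (Or.inl (EReal.coe_ne_bot _)) (Or.inl (EReal.coe_ne_top _))]
    refine iSup₂_le fun a ha => ?_
    rw [EReal.le_sub_iff_add_le (Or.inl (EReal.coe_ne_bot _)) (Or.inl (EReal.coe_ne_top _))]
    have key : ∀ s ∈ S, ((⟪a, e⟫ + t * ⟪s, e⟫ : ℝ) : EReal) ≤
        ⨆ y ∈ A + t • S, ((⟪y, e⟫ : ℝ) : EReal) := by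
      intro s hs
      rw [← real_inner_smul_left, ← inner_add_left]
      exact le_iSup₂ (f := fun y (_ : y ∈ A + t • S) => ((⟪y, e⟫ : ℝ) : EReal)) (a + t • s)
        (add_mem_add ha (smul_mem_smul_set hs))
    generalize (⨆ y ∈ A + t • S, ((⟪y, e⟫ : ℝ) : EReal)) = M at key ⊢
    induction M with
    | bot => exact absurd (le_bot_iff.1 (key 0 h0S)) (EReal.coe_ne_bot _)
    | top => exact le_top
    | coe r =>
      have key' : ∀ s ∈ S, ⟪a, e⟫ + t * ⟪s, e⟫ ≤ r := fun s hs => EReal.coe_le_coe_iff.1 (key s hs)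
      rw [← EReal.coe_add, EReal.coe_le_coe_iff]
      rcases ht.eq_or_lt with rfl | htp
      · simpa using key' 0 h0S
      · have := h2 ((r - ⟪a, e⟫) / t) (fun s hs => by
          rw [le_div_iff₀ htp]; linarith [key' s hs])
        rw [le_div_iff₀ htp] at this
        linarith
  · refine iSup₂_le fun y hy => ?_
    obtain ⟨a, ha, z, ⟨s, hs, rfl⟩, rfl⟩ := hy
    simp only [inner_add_left, real_inner_smul_left, EReal.coe_add]
    refine add_le_add (le_iSup₂ (f := fun y (_ : y ∈ A) => ((⟪y, e⟫ : ℝ) : EReal)) a ha) ?_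
    rw [EReal.coe_le_coe_iff, mul_comm]
    exact mul_le_mul_of_nonneg_right (h1 s hs) ht

lemma exists_dir {d : ℕ} (f : Euc d →L[ℝ] ℝ) (hf : f ≠ 0) :
    ∃ e ∈ sphere (0:Euc d) 1, ∃ k : ℝ, 0 < k ∧ ∀ y, ⟪y, e⟫ = k * f y := by
  set v := (InnerProductSpace.toDual ℝ (Euc d)).symm f with hv
  have hv0 : v ≠ 0 := by
    rw [hv]; simpa using hf
  have hn : 0 < ‖v‖ := norm_pos_iff.2 hv0
  refine ⟨‖v‖⁻¹ • v, by simp [norm_smul, hn.ne'], ‖v‖⁻¹, by positivity, fun y => ?_⟩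
  rw [real_inner_smul_right, real_inner_comm, hv, InnerProductSpace.toDual_symm_apply]

lemma sphere_ne {d : ℕ} (hd1 : 1 ≤ d) : (sphere (0:Euc d) 1).Nonempty := by
  haveI : Nonempty (Fin d) := ⟨⟨0, hd1⟩⟩
  exact NormedSpace.sphere_nonempty.2 zero_le_one

lemma open_conv {d : ℕ} (hd1 : 1 ≤ d) (B : Set (Euc d)) (hBo : IsOpen B) (hBc : Convex ℝ B) :
    B = ⋂ e ∈ sphere (0:Euc d) 1,
        {x : Euc d | ((⟪x, e⟫ : ℝ) : EReal) < ⨆ y ∈ B, ((⟪y, e⟫ : ℝ) : EReal)} := by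
  ext x
  simp only [mem_iInter, mem_setOf_eq]
  constructor
  · intro hx e he
    obtain ⟨ε, hε, hb⟩ := Metric.isOpen_iff.1 hBo x hx
    have he1 : ‖e‖ = 1 := by simpa using he
    have hm : x + (ε / 2) • e ∈ B := by
      apply hb
      simp [norm_smul, he1, abs_of_pos hε, hε]
    refine lt_of_lt_of_le ?_
      (le_iSup₂ (f := fun y (_ : y ∈ B) => ((⟪y, e⟫ : ℝ) : EReal)) _ hm)
    rw [EReal.coe_lt_coe_iff, inner_add_left, real_inner_smul_left, real_inner_self_eq_norm_sq, he1]
    linarith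
  · intro h
    by_contra hx
    obtain ⟨e₀, he₀⟩ := sphere_ne hd1
    rcases B.eq_empty_or_nonempty with rfl | ⟨b, hb⟩
    · simpa using h e₀ he₀
    obtain ⟨f, hf⟩ := geometric_hahn_banach_open_point hBc hBo hx
    have hf0 : f ≠ 0 := by
      rintro rfl
      simpa using hf b hb
    obtain ⟨e, he, k, hk, hek⟩ := exists_dir f hf0
    refine (h e he).not_ge (iSup₂_le fun y hy => ?_)
    rw [EReal.coe_le_coe_iff, hek, hek]
    exact mul_le_mul_of_nonneg_left (hf y hy).le hk.le

lemma closure_conv {d : ℕ} (hd1 : 1 ≤ d) (B : Set (Euc d)) (hBc : Convex ℝ B) :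
    closure B = ⋂ e ∈ sphere (0:Euc d) 1,
        {x : Euc d | ((⟪x, e⟫ : ℝ) : EReal) ≤ ⨆ y ∈ B, ((⟪y, e⟫ : ℝ) : EReal)} := by
  apply Subset.antisymm
  · refine closure_minimal ?_ ?_
    · intro x hx
      simp only [mem_iInter, mem_setOf_eq]
      intro e _
      exact le_iSup₂ (f := fun y (_ : y ∈ B) => ((⟪y, e⟫ : ℝ) : EReal)) x hx
    · refine isClosed_biInter fun e _ => isClosed_le ?_ continuous_const
      exact continuous_coe_real_ereal.comp (by fun_prop)
  · intro x h
    simp only [mem_iInter, mem_setOf_eq] at h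
    by_contra hx
    obtain ⟨e₀, he₀⟩ := sphere_ne hd1
    rcases B.eq_empty_or_nonempty with rfl | ⟨b, hb⟩
    · simpa using h e₀ he₀
    obtain ⟨f, u, hf, hu⟩ := geometric_hahn_banach_closed_point hBc.closure isClosed_closure hx
    have hf0 : f ≠ 0 := by
      rintro rfl
      have := hf b (subset_closure hb)
      simp at this hu
      linarith
    obtain ⟨e, he, k, hk, hek⟩ := exists_dir f hf0
    have h1 : (⨆ y ∈ B, ((⟪y, e⟫ : ℝ) : EReal)) ≤ ((k * u : ℝ) : EReal) := by
      refine iSup₂_le fun y hy => ?_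
      rw [EReal.coe_le_coe_iff, hek]
      exact mul_le_mul_of_nonneg_left (hf y (subset_closure hy)).le hk.le
    have h2 := (h e he).trans h1
    rw [EReal.coe_le_coe_iff, hek] at h2
    exact absurd (mul_lt_mul_of_pos_left hu hk) (not_lt.2 h2)

/-- Lemma 4.5: for open convex `A` and `t ≥ 0`, `A + tS` and its closure are
the intersections of the corresponding open/closed half-spaces (with suprema in `ℝ ∪ {+∞}`,
a half-space condition with infinite right-hand side being vacuous). -/
theorem stmt12 {d : ℕ} (hd1 : 1 ≤ d) (S : Set (Euc d))
    (hSo : IsOpen S) (hSb : Bornology.IsBounded S) (hSc : Convex ℝ S) (h0S : (0:Euc d) ∈ S)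
    (A : Set (Euc d)) (hAo : IsOpen A) (hAc : Convex ℝ A) (t : ℝ) (ht : 0 ≤ t) :
    (A + t • S =
      ⋂ e ∈ sphere (0:Euc d) 1,
        {x : Euc d | ((⟪x, e⟫ : ℝ) : EReal) <
          (⨆ y ∈ A, ((⟪y, e⟫ : ℝ) : EReal)) + ((cstarOf S e * t : ℝ) : EReal)}) ∧
    (closure (A + t • S) =
      ⋂ e ∈ sphere (0:Euc d) 1,
        {x : Euc d | ((⟪x, e⟫ : ℝ) : EReal) ≤
          (⨆ y ∈ A, ((⟪y, e⟫ : ℝ) : EReal)) + ((cstarOf S e * t : ℝ) : EReal)}) := by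
  have hc : Convex ℝ (A + t • S) := hAc.add (hSc.smul t)
  have ho : IsOpen (A + t • S) := hAo.add_right
  constructor
  · refine (open_conv hd1 _ ho hc).trans ?_
    refine iInter₂_congr fun e he => ?_
    rw [sup_add_eq S hSb h0S A t ht e he]
  · refine (closure_conv hd1 _ hc).trans ?_
    refine iInter₂_congr fun e he => ?_
    rw [sup_add_eq S hSb h0S A t ht e he]
end
end

section
/- Let d ≥ 1 and let w : S^{d−1} → (0,∞) be continuous. Define S := {se : e ∈ S^{d−1}, s ∈ [0,w(e))} ⊆ ℝ^d. If for all e,e' ∈ S^{d−1} and all s ∈ (0,1) for which z := s·w(e)e + (1−s)·w(e')e' is nonzero one has w(z/|z|) ≥ |z|, then S is convex. -/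
open Metric Set Filter
open scoped Topology RealInnerProductSpace Pointwise

noncomputable section

/-- Lemma 4.1: the convexity criterion for the Wulff shape: if
`w(z/|z|) ≥ |z|` for every nonzero convex combination `z` of `w(e)e` and `w(e')e'`, then the
Wulff shape of `w` is convex. -/
theorem stmt13 {d : ℕ} (hd1 : 1 ≤ d) (w : Euc d → ℝ)
    (hw : ContinuousOn w (sphere (0:Euc d) 1))
    (hwpos : ∀ e ∈ sphere (0:Euc d) 1, 0 < w e)
    (h : ∀ e ∈ sphere (0:Euc d) 1, ∀ e' ∈ sphere (0:Euc d) 1, ∀ s ∈ Ioo (0:ℝ) 1,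
      ∀ hz : s • (w e • e) + (1 - s) • (w e' • e') ≠ 0,
        ‖s • (w e • e) + (1 - s) • (w e' • e')‖ ≤
          w (‖s • (w e • e) + (1 - s) • (w e' • e')‖⁻¹ • (s • (w e • e) + (1 - s) • (w e' • e')))) :
    Convex ℝ (wulff w) := by
  intro x hx y hy p q hp hq hpq
  obtain ⟨e, he, a, ha0, ha, rfl⟩ := hx
  obtain ⟨f, hf, b, hb0, hb, rfl⟩ := hy
  have hwe := hwpos e he
  have hwf := hwpos f hf
  have ha1 : a / w e < 1 := (div_lt_one hwe).2 ha
  have hb1 : b / w f < 1 := (div_lt_one hwf).2 hb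
  have ha2 : 0 ≤ a / w e := div_nonneg ha0 hwe.le
  have hb2 : 0 ≤ b / w f := div_nonneg hb0 hwf.le
  obtain ⟨A, hA⟩ : ∃ A, A = p * (a / w e) := ⟨_, rfl⟩
  obtain ⟨B, hB⟩ : ∃ B, B = q * (b / w f) := ⟨_, rfl⟩
  have hA0 : 0 ≤ A := hA ▸ mul_nonneg hp ha2
  have hB0 : 0 ≤ B := hB ▸ mul_nonneg hq hb2
  have hlt : A + B < 1 := by
    rcases hp.eq_or_lt with h0 | h0
    · subst h0
      have : q = 1 := by linarith
      subst this
      rw [hA, hB]; linarith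
    · have h1 : A < p := by rw [hA]; nlinarith
      have h2 : B ≤ q := by rw [hB]; nlinarith
      linarith
  have hAe : p • a • e = A • w e • e := by
    rw [smul_smul, smul_smul, hA]; congr 1; field_simp
  have hBf : q • b • f = B • w f • f := by
    rw [smul_smul, smul_smul, hB]; congr 1; field_simp
  rw [hAe, hBf]
  rcases hA0.eq_or_lt with h0 | hApos
  · subst h0
    refine ⟨f, hf, B * w f, by positivity, by nlinarith, ?_⟩
    rw [zero_smul, zero_add, smul_smul]
  rcases hB0.eq_or_lt with h0 | hBpos
  · subst h0
    refine ⟨e, he, A * w e, by positivity, by nlinarith, ?_⟩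
    rw [zero_smul, add_zero, smul_smul]
  have ht : 0 < A + B := by positivity
  have hs : A / (A + B) ∈ Ioo (0:ℝ) 1 :=
    ⟨by positivity, (div_lt_one ht).2 (by linarith)⟩
  have key := h e he f hf _ hs
  obtain ⟨z, hz⟩ : ∃ z, z = (A / (A + B)) • (w e • e) + (1 - A / (A + B)) • (w f • f) := ⟨_, rfl⟩
  rw [← hz] at key
  have hzz : A • w e • e + B • w f • f = (A + B) • z := by
    rw [hz, smul_add, smul_smul (A + B), smul_smul (A + B)]
    congr 2
    · field_simp
    · field_simp; ring
  rw [hzz]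
  by_cases hz0 : z = 0
  · exact ⟨e, he, 0, le_rfl, hwe, by simp [hz0]⟩
  have hn : 0 < ‖z‖ := norm_pos_iff.2 hz0
  refine ⟨‖z‖⁻¹ • z, ?_, (A + B) * ‖z‖, by positivity, ?_, ?_⟩
  · rw [mem_sphere_zero_iff_norm, norm_smul, norm_inv, norm_norm, inv_mul_cancel₀ hn.ne']
  · have := key hz0
    nlinarith
  · rw [smul_smul, mul_assoc, mul_inv_cancel₀ hn.ne', mul_one]
end
end

section
/- Let d ≥ 1, η ∈ (0,1/2], m > 0, M > 0, and α ∈ (0,η]. Let f : ℝ^d × ℝ → ℝ be such that for each x, u ↦ f(x,u) is Lipschitz with constant M, non-increasing on (−∞,2η], and non-increasing on [1−2η,∞). Let u : ℝ×ℝ^d → ℝ be C^{1,2}, solve u_t = Δu + f(x,u) classically on ℝ×ℝ^d, and satisfy ∂_t u ≥ 0 everywhere and ∂_t u(t,x) ≥ m whenever u(t,x) ∈ [η,1−η]. Then: (a) the function v⁺(t,x) := u((1+Mα·m^{−1})t, x) + α is a supersolution: ∂_t v⁺ ≥ Δv⁺ + f(x,v⁺) at every (t,x) ∈ ℝ×ℝ^d;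 and (b) the function v⁻(t,x) := u((1−Mα·m^{−1})t, x) − α is a subsolution: ∂_t v⁻ ≤ Δv⁻ + f(x,v⁻) at every (t,x) ∈ ℝ×ℝ^d. -/
open Metric Set Filter
open scoped Topology

noncomputable section

/-- time-dilated super- and subsolutions `v⁺(t,x) = u((1+Mα/m)t,x) + α` and
`v⁻(t,x) = u((1−Mα/m)t,x) − α` built from a solution with time derivative `≥ m` on intermediate
level sets. -/
theorem stmt16 {d : ℕ} (hd1 : 1 ≤ d) (η m M α : ℝ)
    (hη : η ∈ Ioc (0:ℝ) (1/2)) (hm : 0 < m) (hM : 0 < M) (hα : α ∈ Ioc (0:ℝ) η)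
    (f : Euc d → ℝ → ℝ)
    (hlip : ∀ (x : Euc d) (u u' : ℝ), |f x u - f x u'| ≤ M * |u - u'|)
    (hmono1 : ∀ x : Euc d, AntitoneOn (fun u => f x u) (Iic (2*η)))
    (hmono2 : ∀ x : Euc d, AntitoneOn (fun u => f x u) (Ici (1-2*η)))
    (u ut : ℝ → Euc d → ℝ)
    (hspace : ∀ t : ℝ, ContDiff ℝ 2 (u t))
    (hcont : Continuous fun p : ℝ × Euc d => ut p.1 p.2)
    (hut : ∀ (t : ℝ) (x : Euc d), HasDerivAt (fun s => u s x) (ut t x) t)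
    (heq : ∀ (t : ℝ) (x : Euc d), ut t x = lap (u t) x + f x (u t x))
    (hut0 : ∀ (t : ℝ) (x : Euc d), 0 ≤ ut t x)
    (hutm : ∀ (t : ℝ) (x : Euc d), u t x ∈ Icc η (1-η) → m ≤ ut t x) :
    (∀ (t : ℝ) (x : Euc d),
      HasDerivAt (fun s => u ((1 + M*α/m) * s) x + α)
        ((1 + M*α/m) * ut ((1 + M*α/m) * t) x) t ∧
      lap (fun z => u ((1 + M*α/m) * t) z + α) x + f x (u ((1 + M*α/m) * t) x + α) ≤
        (1 + M*α/m) * ut ((1 + M*α/m) * t) x) ∧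
    (∀ (t : ℝ) (x : Euc d),
      HasDerivAt (fun s => u ((1 - M*α/m) * s) x - α)
        ((1 - M*α/m) * ut ((1 - M*α/m) * t) x) t ∧
      (1 - M*α/m) * ut ((1 - M*α/m) * t) x ≤
        lap (fun z => u ((1 - M*α/m) * t) z - α) x + f x (u ((1 - M*α/m) * t) x - α)) := by
  obtain ⟨hα0, hαη⟩ := hα
  have hc : 0 < M * α / m := by positivity
  have hMα : M * α = M * α / m * m := by field_simp
  have hlapa : ∀ (φ : Euc d → ℝ) (x : Euc d), lap (fun z => φ z + α) x = lap φ x := by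
    intro φ x
    simp only [lap, fderiv_add_const]
  have hlaps : ∀ (φ : Euc d → ℝ) (x : Euc d), lap (fun z => φ z - α) x = lap φ x := by
    intro φ x
    simp only [lap, fderiv_sub_const]
  have hder : ∀ (c t : ℝ) (x : Euc d),
      HasDerivAt (fun s => u (c * s) x) (c * ut (c * t) x) t := by
    intro c t x
    have h2 : HasDerivAt (fun s : ℝ => c * s) c t := by
      simpa using (hasDerivAt_id t).const_mul c
    have h := (hut (c * t) x).comp t h2
    rw [mul_comm c (ut _ _)]
    exact h
  have key : ∀ (t : ℝ) (x : Euc d),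
      f x (u t x + α) - f x (u t x) ≤ M * α / m * ut t x ∧
      f x (u t x) - f x (u t x - α) ≤ M * α / m * ut t x := by
    intro t x
    have h0 : 0 ≤ M * α / m * ut t x := mul_nonneg hc.le (hut0 t x)
    rcases lt_or_ge (u t x) η with h1 | h1
    · have a := hmono1 x (a := u t x) (b := u t x + α) (by simp only [mem_Iic]; linarith)
        (by simp only [mem_Iic]; linarith) (by linarith)
      have b := hmono1 x (a := u t x - α) (b := u t x) (by simp only [mem_Iic]; linarith)
        (by simp only [mem_Iic]; linarith) (by linarith)
      simp only at a b
      constructor <;> linarith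
    · rcases lt_or_ge (1 - η) (u t x) with h2 | h2
      · have a := hmono2 x (a := u t x) (b := u t x + α) (by simp only [mem_Ici]; linarith)
          (by simp only [mem_Ici]; linarith) (by linarith)
        have b := hmono2 x (a := u t x - α) (b := u t x) (by simp only [mem_Ici]; linarith)
          (by simp only [mem_Ici]; linarith) (by linarith)
        simp only at a b
        constructor <;> linarith
      · have h3 := mul_le_mul_of_nonneg_left (hutm t x ⟨h1, h2⟩) hc.le
        have a := (le_abs_self _).trans (hlip x (u t x + α) (u t x))
        have b := (le_abs_self _).trans (hlip x (u t x) (u t x - α))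
        rw [add_sub_cancel_left, abs_of_pos hα0] at a
        rw [sub_sub_cancel, abs_of_pos hα0] at b
        constructor <;> linarith
  refine ⟨fun t x => ⟨(hder _ t x).add_const α, ?_⟩, fun t x => ⟨(hder _ t x).sub_const α, ?_⟩⟩
  · rw [hlapa]
    have h1 := (key ((1 + M*α/m) * t) x).1
    have h2 := heq ((1 + M*α/m) * t) x
    rw [add_mul 1 (M*α/m) (ut _ _)]
    linarith
  · rw [hlaps]
    have h1 := (key ((1 - M*α/m) * t) x).2
    have h2 := heq ((1 - M*α/m) * t) x
    rw [sub_mul 1 (M*α/m) (ut _ _)]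
    linarith
end
end

section
/- Let d ≥ 1, l₁,…,l_d > 0, and let U : ℝ×ℝ^d → ℝ be C¹ with U(s, x + l_i e_i) = U(s,x) for each i and all (s,x) (where {e_i} is the standard basis), ∂_s U(s,x) < 0 for all (s,x), and U(s,x) → 1 as s → −∞ and U(s,x) → 0 as s → +∞, both uniformly in x. Let c > 0, e ∈ S^{d−1}, and define u(t,x) := U(x·e − ct, x). Then for every η ∈ (0,1/2) there exists m_η > 0 such that ∂_t u(t,x) ≥ m_η for all (t,x) ∈ ℝ×ℝ^d with u(t,x) ∈ [η, 1−η]. -/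
open Metric Set Filter
open scoped Topology RealInnerProductSpace

noncomputable section

/-- uniform positivity of the time derivative of a pulsating front
`u(t,x) = U(x·e − ct,x)` on intermediate level sets. -/
theorem stmt17 {d : ℕ} (hd1 : 1 ≤ d) (l : Fin d → ℝ) (hl : ∀ i, 0 < l i)
    (U : ℝ → Euc d → ℝ)
    (hU1 : ContDiff ℝ 1 fun p : ℝ × Euc d => U p.1 p.2)
    (hUper : ∀ i : Fin d, ∀ (s : ℝ) (x : Euc d),
      U s (x + l i • EuclideanSpace.single i 1) = U s x)
    (hUdec : ∀ (s : ℝ) (x : Euc d), deriv (fun s' => U s' x) s < 0)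
    (hUbot : TendstoUniformly U (fun _ => (1:ℝ)) atBot)
    (hUtop : TendstoUniformly U (fun _ => (0:ℝ)) atTop)
    (c : ℝ) (hc : 0 < c) (e : Euc d) (he : e ∈ sphere (0:Euc d) 1) :
    ∀ η : ℝ, 0 < η → η < 1/2 → ∃ mη : ℝ, 0 < mη ∧
      ∀ (t : ℝ) (x : Euc d), U (⟪x, e⟫ - c * t) x ∈ Icc η (1-η) →
        mη ≤ deriv (fun s : ℝ => U (⟪x, e⟫ - c * s) x) t := by
  intro η hη hη2
  -- the group of periods
  let H : AddSubgroup (Euc d) :=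
    { carrier := {v | ∀ (s : ℝ) (x : Euc d), U s (x + v) = U s x}
      zero_mem' := by intro s x; simp
      add_mem' := by
        intro a b ha hb s x
        rw [← add_assoc, hb, ha]
      neg_mem' := by
        intro a ha s x
        have := ha s (x + -a)
        rw [neg_add_cancel_right] at this
        exact this.symm }
  let K : Set (Euc d) := (WithLp.toLp 2) '' (Set.univ.pi fun i => Icc (0:ℝ) (l i))
  have hK : IsCompact K :=
    (isCompact_univ_pi fun i => isCompact_Icc).image (PiLp.continuous_toLp 2 _)
  have hred : ∀ x : Euc d, ∃ y ∈ K, ∀ s, U s x = U s y := by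
    intro x
    let v : Euc d := ∑ i, (⌊x i / l i⌋ : ℤ) • (l i • EuclideanSpace.single i (1:ℝ))
    have hv : v ∈ H := by
      refine sum_mem fun i _ => zsmul_mem ?_ _
      exact fun s x => hUper i s x
    have hvi : ∀ i, v i = (⌊x i / l i⌋ : ℝ) * l i := by
      intro i
      simp [v, Finset.sum_apply, Pi.single_apply]
      ring
    refine ⟨x - v, ⟨fun i => (x - v) i, ?_, ?_⟩, ?_⟩
    · intro i _
      have h1 := Int.floor_le (x i / l i)
      have h2 := (Int.lt_floor_add_one (x i / l i)).le
      rw [le_div_iff₀ (hl i)] at h1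
      rw [div_le_iff₀ (hl i)] at h2
      simp only [PiLp.sub_apply, hvi, mem_Icc]
      constructor <;> linarith
    · ext i; simp
    · intro s
      have := hv s (x - v)
      rwa [sub_add_cancel] at this
  have hdiff : Differentiable ℝ (fun p : ℝ × Euc d => U p.1 p.2) :=
    hU1.differentiable (by norm_num)
  have hD : ∀ s x, HasDerivAt (fun s' => U s' x)
      (fderiv ℝ (fun p : ℝ × Euc d => U p.1 p.2) (s, x) (1, 0)) s := by
    intro s x
    exact (hdiff (s, x)).hasFDerivAt.comp_hasDerivAt s
      ((hasDerivAt_id s).prodMk (hasDerivAt_const s x))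
  have hcont : Continuous fun p : ℝ × Euc d =>
      fderiv ℝ (fun p : ℝ × Euc d => U p.1 p.2) p (1, 0) :=
    (hU1.continuous_fderiv (by norm_num)).clm_apply continuous_const
  obtain ⟨A, hA⟩ := eventually_atBot.1 (Metric.tendstoUniformly_iff.1 hUbot η hη)
  obtain ⟨B, hB⟩ := eventually_atTop.1 (Metric.tendstoUniformly_iff.1 hUtop η hη)
  have hbd : ∀ s x, U s x ∈ Icc η (1-η) → s ∈ Icc A B := by
    intro s x hs
    constructor
    · by_contra! h
      have := hA s h.le x
      rw [Real.dist_eq, abs_lt] at this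
      linarith [hs.2]
    · by_contra! h
      have := hB s h.le x
      rw [Real.dist_eq, abs_lt] at this
      linarith [hs.1]
  obtain ⟨m, hm, hmle⟩ : ∃ m : ℝ, 0 < m ∧ ∀ p ∈ Icc A B ×ˢ K,
      m ≤ -(fderiv ℝ (fun p : ℝ × Euc d => U p.1 p.2) p (1, 0)) := by
    rcases (Icc A B ×ˢ K).eq_empty_or_nonempty with h | h
    · exact ⟨1, one_pos, by simp [h]⟩
    · obtain ⟨q, -, hq⟩ := (isCompact_Icc.prod hK).exists_isMinOn h hcont.neg.continuousOn
      refine ⟨_, ?_, fun p hp => hq hp⟩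
      have := hUdec q.1 q.2
      rw [(hD q.1 q.2).deriv] at this
      exact neg_pos.2 this
  refine ⟨m * c, mul_pos hm hc, fun t x hx => ?_⟩
  obtain ⟨y, hy, hxy⟩ := hred x
  have hmem := hbd _ _ hx
  have hin : HasDerivAt (fun s : ℝ => ⟪x, e⟫ - c * s) (-c) t := by
    simpa using ((hasDerivAt_id t).const_mul c).const_sub ⟪x, e⟫
  have hder := (hD (⟪x, e⟫ - c * t) y).comp t hin
  have hfun : (fun s : ℝ => U (⟪x, e⟫ - c * s) x) =
      (fun s' => U s' y) ∘ (fun s : ℝ => ⟪x, e⟫ - c * s) := by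
    funext s; exact hxy _
  rw [hfun, hder.deriv]
  have := mul_le_mul_of_nonneg_right (hmle (⟪x, e⟫ - c * t, y) ⟨hmem, hy⟩) hc.le
  linarith
end
end
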